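/- Let V ∈ 𝒫^{s,p}_q(ℝⁿ), g ∈ W^{s,p}(ℝⁿ), K ∈ 𝒦_p, and let u ∈ Y^{s,p}_g(Ω)^+ be a weak supersolution of L^p_K u + V|u|^{p−2}u = 0 in Ω with exterior data g, with u ≥ 0 in B_R(x₀) ⊂ Ω. For a, b ∈ (0,1) set v(x) = ln( (a+b)/(u(x)+b) ), and for d > 0 set v̄ = min( max(v, 0), d ). Then there is a constant C > 0 depending only on n, s, p, λ, Λ and Ω such that for every r ∈ (0, R/2): ⨍_{B_r(x₀)} | v̄(x) − v̄_{B_r(x₀)} |^p dx ≤ C·[ b^{−(p−1)}·(r/R)^{ps}·[𝒯_R(u_−;x₀)]^{p−1} + (1 + ‖V_+‖_{L^q(Ω)}) ], where v̄_B denotes the average of v̄ over the ball B and u_− = max{−u,0}. -/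

import Mathlib

open MeasureTheory Real Set Metric Filter ENNReal

noncomputable section

abbrev Rn (n : ℕ) : Type := EuclideanSpace ℝ (Fin n)

namespace NLS

/-- The normalization constant `c_{n,p,s}`. -/
def cnps (n : ℕ) (p s : ℝ) : ℝ :=
  Real.Gamma (((n : ℝ) + p) / 2) * p * (1 - s) /
    (Real.pi ^ (((n : ℝ) - 1) / 2) * Real.Gamma ((p + 1) / 2))

/-- Membership in the kernel class `𝒦_p`. -/
def KernelClass (n : ℕ) (p s lam Lam : ℝ) (K : Rn n → ℝ) : Prop :=
  Measurable K ∧ (∀ y, K (-y) = K y) ∧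
    ∀ y : Rn n, y ≠ 0 →
      cnps n p s * lam * ‖y‖ ^ (-(n : ℝ) - p * s) ≤ K y ∧
        K y ≤ cnps n p s * Lam * ‖y‖ ^ (-(n : ℝ) - p * s)

/-- `H_p(t) = |t|^{p-2} t`. -/
def Hp (p t : ℝ) : ℝ := |t| ^ (p - 2) * t

/-- Positive part of a function. -/
def plusPart {n : ℕ} (f : Rn n → ℝ) : Rn n → ℝ := fun x => max (f x) 0

/-- Negative part of a function. -/
def minusPart {n : ℕ} (f : Rn n → ℝ) : Rn n → ℝ := fun x => max (-f x) 0

/-- The Gagliardo integrand `|u(x)-u(y)|^p |x-y|^{-n-ps}`. -/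
def gagliardoIntegrand (n : ℕ) (p s : ℝ) (u : Rn n → ℝ) (z : Rn n × Rn n) : ℝ :=
  |u z.1 - u z.2| ^ p * ‖z.1 - z.2‖ ^ (-(n : ℝ) - p * s)

/-- The Gagliardo seminorm `[u]_{W^{s,p}(U)}`. -/
def gagliardoSemi (n : ℕ) (p s : ℝ) (U : Set (Rn n)) (u : Rn n → ℝ) : ℝ :=
  (∫ z in U ×ˢ U, gagliardoIntegrand n p s u z) ^ (1 / p)

/-- The `L^p(U)` norm. -/
def lpNormOn (n : ℕ) (p : ℝ) (U : Set (Rn n)) (u : Rn n → ℝ) : ℝ :=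
  (∫ x in U, |u x| ^ p) ^ (1 / p)

/-- The `W^{s,p}(U)` norm. -/
def wspNorm (n : ℕ) (p s : ℝ) (U : Set (Rn n)) (u : Rn n → ℝ) : ℝ :=
  lpNormOn n p U u + gagliardoSemi n p s U u

/-- Membership in the fractional Sobolev space `W^{s,p}(U)`. -/
def MemWsp (n : ℕ) (p s : ℝ) (U : Set (Rn n)) (u : Rn n → ℝ) : Prop :=
  Measurable u ∧ IntegrableOn (fun x => |u x| ^ p) U ∧
    IntegrableOn (gagliardoIntegrand n p s u) (U ×ˢ U)

/-- `ℝ^{2n}_Ω = ℝ^{2n} ∖ (Ωᶜ × Ωᶜ)`. -/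
def R2n (n : ℕ) (Ω : Set (Rn n)) : Set (Rn n × Rn n) := {z | z.1 ∈ Ω ∨ z.2 ∈ Ω}

/-- Membership in `X^{s,p}(Ω)`. -/
def MemX (n : ℕ) (p s : ℝ) (Ω : Set (Rn n)) (u : Rn n → ℝ) : Prop :=
  Measurable u ∧ IntegrableOn (fun x => |u x| ^ p) Ω ∧
    IntegrableOn (gagliardoIntegrand n p s u) (R2n n Ω)

/-- Membership in `X^{s,p}_0(Ω)`. -/
def MemX0 (n : ℕ) (p s : ℝ) (Ω : Set (Rn n)) (u : Rn n → ℝ) : Prop :=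
  MemX n p s Ω u ∧ ∀ᵐ x ∂(volume : Measure (Rn n)), x ∉ Ω → u x = 0

/-- The norm `‖u‖_{X^{s,p}_0(Ω)}`. -/
def normX0 (n : ℕ) (p s : ℝ) (Ω : Set (Rn n)) (u : Rn n → ℝ) : ℝ :=
  (∫ z in R2n n Ω, gagliardoIntegrand n p s u z) ^ (1 / p)

/-- Open axis-parallel cube with center `c` and half side-length `h`. -/
def cube (n : ℕ) (c : Fin n → ℝ) (h : ℝ) : Set (Rn n) := {y | ∀ i, |y i - c i| < h}

/-- The `(A_1,A_1)` characteristic `[υ,ω]_{(A_1,A_1)}`. -/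
def A1const (n : ℕ) (υ ω : Rn n → ℝ) : ℝ≥0∞ :=
  ⨆ (c : Fin n → ℝ) (h : ℝ) (_ : 0 < h),
    ENNReal.ofReal (⨍ y in cube n c h, υ y) *
      essSup (fun y => (ENNReal.ofReal (ω y))⁻¹) (volume.restrict (cube n c h))

/-- `(υ,ω)` belongs to the `(A_1,A_1)`-Muckenhoupt class. -/
def A1pair (n : ℕ) (υ ω : Rn n → ℝ) : Prop := A1const n υ ω < ⊤

/-- `ω` belongs to the `A_1`-Muckenhoupt class. -/
def A1 (n : ℕ) (ω : Rn n → ℝ) : Prop := A1pair n ω ω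

/-- Membership in the potential class `𝒫^{s,p}_q(ℝⁿ)`. -/
structure IsPotential (n : ℕ) (p s q : ℝ) (V : Rn n → ℝ) : Prop where
  measurable : Measurable V
  minusPart_locInt : LocallyIntegrable (minusPart V) volume
  plusPart_locLq : LocallyIntegrable (fun x => plusPart V x ^ q) volume
  exists_b : ∃ b : Rn n → ℝ, Measurable b ∧ (∀ᵐ x ∂(volume : Measure (Rn n)), 0 < b x) ∧
    (∃ M : ℝ, ∀ x, |b x| ≤ M) ∧
    LocallyIntegrable (fun x => (plusPart V x / b x) ^ q) volume ∧
    ∀ i : ℕ, 0 < i →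
      A1pair n (minusPart V) (fun x => max (b x) (1 / (i : ℝ)) / b x * plusPart V x) ∧
      A1 n (fun x => max (b x) (1 / (i : ℝ)) / b x * plusPart V x)

/-- Membership in the weighted class `L^p_V(Ω)`. -/
def MemLpV (n : ℕ) (p : ℝ) (Ω : Set (Rn n)) (V u : Rn n → ℝ) : Prop :=
  IntegrableOn (fun x => |u x| ^ p * plusPart V x) Ω ∧
    IntegrableOn (fun x => |u x| ^ p * minusPart V x) Ω

/-- Membership in `Y^{s,p}(Ω)`. -/
def MemY (n : ℕ) (p s : ℝ) (Ω : Set (Rn n)) (V u : Rn n → ℝ) : Prop :=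
  MemX n p s Ω u ∧ MemLpV n p Ω V u

/-- Membership in `Y^{s,p}_0(Ω)`. -/
def MemY0 (n : ℕ) (p s : ℝ) (Ω : Set (Rn n)) (V u : Rn n → ℝ) : Prop :=
  MemX0 n p s Ω u ∧ MemLpV n p Ω V u

/-- Membership in `Y^{s,p}_g(Ω)^+`. -/
def MemYgPlus (n : ℕ) (p s : ℝ) (Ω : Set (Rn n)) (V g u : Rn n → ℝ) : Prop :=
  MemY n p s Ω V u ∧ MemY0 n p s Ω V (fun x => max (g x - u x) 0)

/-- Membership in `Y^{s,p}_g(Ω)^-`. -/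
def MemYgMinus (n : ℕ) (p s : ℝ) (Ω : Set (Rn n)) (V g u : Rn n → ℝ) : Prop :=
  MemY n p s Ω V u ∧ MemY0 n p s Ω V (fun x => max (u x - g x) 0)

/-- Membership in `Y^{s,p}_g(Ω)`. -/
def MemYg (n : ℕ) (p s : ℝ) (Ω : Set (Rn n)) (V g u : Rn n → ℝ) : Prop :=
  MemYgPlus n p s Ω V g u ∧ MemYgMinus n p s Ω V g u

/-- The pairing `⟨u,φ⟩_{H_p,K}`. -/
def pairing (n : ℕ) (p : ℝ) (K u φ : Rn n → ℝ) : ℝ :=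
  ∫ z : Rn n × Rn n, Hp p (u z.1 - u z.2) * (φ z.1 - φ z.2) * K (z.1 - z.2)

/-- `u` is a weak subsolution of `L^p_K u + V|u|^{p-2}u = 0` in `Ω` with exterior data `g`. -/
def WeakSubsolution (n : ℕ) (p s : ℝ) (Ω : Set (Rn n)) (K V g u : Rn n → ℝ) : Prop :=
  MemYgMinus n p s Ω V g u ∧
    ∀ φ : Rn n → ℝ, MemY0 n p s Ω V φ → (∀ x, 0 ≤ φ x) →
      pairing n p K u φ + ∫ x : Rn n, V x * (|u x| ^ (p - 2) * u x) * φ x ≤ 0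

/-- `u` is a weak supersolution of `L^p_K u + V|u|^{p-2}u = 0` in `Ω` with exterior data `g`. -/
def WeakSupersolution (n : ℕ) (p s : ℝ) (Ω : Set (Rn n)) (K V g u : Rn n → ℝ) : Prop :=
  MemYgPlus n p s Ω V g u ∧
    ∀ φ : Rn n → ℝ, MemY0 n p s Ω V φ → (∀ x, 0 ≤ φ x) →
      0 ≤ pairing n p K u φ + ∫ x : Rn n, V x * (|u x| ^ (p - 2) * u x) * φ x

/-- `u` is a weak solution of `L^p_K u + V|u|^{p-2}u = 0` in `Ω` with exterior data `g`. -/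
def WeakSolution (n : ℕ) (p s : ℝ) (Ω : Set (Rn n)) (K V g u : Rn n → ℝ) : Prop :=
  MemYg n p s Ω V g u ∧
    ∀ φ : Rn n → ℝ, MemY0 n p s Ω V φ →
      pairing n p K u φ + ∫ x : Rn n, V x * (|u x| ^ (p - 2) * u x) * φ x = 0

/-- The surface measure `|S^{n-1}|` of the unit sphere of `ℝⁿ`. -/
def sphereArea (n : ℕ) : ℝ := n * (volume (Metric.ball (0 : Rn n) 1)).toReal

/-- The nonlocal tail `𝒯_r(u;x₀)`. -/
def tail (n : ℕ) (p s : ℝ) (u : Rn n → ℝ) (x₀ : Rn n) (r : ℝ) : ℝ :=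
  (p * s / sphereArea n * r ^ (p * s) *
      ∫ y in (Metric.ball x₀ r)ᶜ, |u y| ^ (p - 1) * ‖y - x₀‖ ^ (-(n : ℝ) - p * s)) ^ (1 / (p - 1))

def supOn {n : ℕ} (u : Rn n → ℝ) (B : Set (Rn n)) : ℝ := sSup (u '' B)
def infOn {n : ℕ} (u : Rn n → ℝ) (B : Set (Rn n)) : ℝ := sInf (u '' B)
def oscOn {n : ℕ} (u : Rn n → ℝ) (B : Set (Rn n)) : ℝ := supOn u B - infOn u B

/-- The `L^q(Ω)` norm, used for `‖V₊‖_{L^q(Ω)}`. -/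
def lqNormOn (n : ℕ) (q : ℝ) (Ω : Set (Rn n)) (f : Rn n → ℝ) : ℝ :=
  (∫ x in Ω, |f x| ^ q) ^ (1 / q)

/-- The Hölder seminorm `[u]_{C^ε(B)}`. -/
def holderSemi {n : ℕ} (ε : ℝ) (B : Set (Rn n)) (u : Rn n → ℝ) : ℝ :=
  sSup ((fun z : Rn n × Rn n => |u z.1 - u z.2| / ‖z.1 - z.2‖ ^ ε) ''
    ((B ×ˢ B) ∩ {z | z.1 ≠ z.2}))

/-- The sup norm `‖u‖_{C(B)}`. -/
def cNorm {n : ℕ} (B : Set (Rn n)) (u : Rn n → ℝ) : ℝ := sSup ((fun x => |u x|) '' B)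

/-- The Hölder norm `‖u‖_{C^ε(B)}`. -/
def holderNorm {n : ℕ} (ε : ℝ) (B : Set (Rn n)) (u : Rn n → ℝ) : ℝ :=
  cNorm B u + holderSemi ε B u

/-- `u` is locally `ε`-Hölder continuous in `Ω`. -/
def LocallyHolder {n : ℕ} (ε : ℝ) (Ω : Set (Rn n)) (u : Rn n → ℝ) : Prop :=
  ∀ (x₀ : Rn n) (r : ℝ), closure (Metric.ball x₀ r) ⊆ Ω →
    ∃ L : ℝ, ∀ x ∈ Metric.ball x₀ r, ∀ y ∈ Metric.ball x₀ r, |u x - u y| ≤ L * ‖x - y‖ ^ ε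

end NLS

open NLS


lemma aux_exp (p L : ℝ) (hp : 1 < p) (hL : 0 ≤ L) :
    (p - 1) / 2 * L ^ p ≤ (exp L - 1) ^ (p - 1) * (1 - exp (-((p - 1) * L))) := by
  have hq : 0 < p - 1 := by linarith
  have h1 : L * exp (L / 2) ≤ exp L - 1 := by
    have h := Real.self_le_sinh_iff.2 (by positivity : 0 ≤ L / 2)
    rw [Real.sinh_eq] at h
    have e1 : exp L = exp (L/2) * exp (L/2) := by rw [← exp_add]; ring_nf
    have e2 : exp (-(L/2)) * exp (L/2) = 1 := by rw [← exp_add]; simp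
    nlinarith [exp_pos (L/2)]
  have h2 : (p - 1) * L / (1 + (p - 1) * L) ≤ 1 - exp (-((p - 1) * L)) := by
    have hx : 0 ≤ (p - 1) * L := by positivity
    set x := (p - 1) * L
    have h := Real.add_one_le_exp x
    have : exp (-x) ≤ 1 / (1 + x) := by
      rw [exp_neg, ← one_div]
      exact one_div_le_one_div_of_le (by positivity) (by linarith)
    have e : x / (1 + x) = 1 - 1 / (1 + x) := by field_simp; ring
    linarith
  have h3 : L ^ (p - 1) * (1 + (p - 1) * L) / 2 ≤ (exp L - 1) ^ (p - 1) := by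
    have : (L * exp (L / 2)) ^ (p - 1) ≤ (exp L - 1) ^ (p - 1) :=
      Real.rpow_le_rpow (by positivity) h1 hq.le
    rw [Real.mul_rpow hL (exp_pos _).le, ← Real.exp_mul] at this
    have h := Real.add_one_le_exp (L / 2 * (p - 1))
    have h' : L ^ (p - 1) * ((1 + (p - 1) * L) / 2) ≤ L ^ (p - 1) * exp (L / 2 * (p - 1)) := by
      apply mul_le_mul_of_nonneg_left _ (by positivity)
      linarith
    linarith
  have hx : 0 ≤ (p - 1) * L := by positivity
  calc (p - 1) / 2 * L ^ p = (L ^ (p - 1) * (1 + (p - 1) * L) / 2) * ((p - 1) * L / (1 + (p - 1) * L)) := by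
        have : L ^ p = L ^ (p - 1) * L := by
          rcases hL.eq_or_lt with h | h
          · rw [← h, Real.zero_rpow (by linarith)]; simp
          · rw [← Real.rpow_add_one h.ne']; ring_nf
        rw [this]; field_simp
    _ ≤ _ := by
        apply mul_le_mul h3 h2 (by positivity)
        apply Real.rpow_nonneg; linarith [Real.add_one_le_exp L]

lemma log_ineq (p A B : ℝ) (hp : 1 < p) (hB : 0 < B) (hAB : B ≤ A) :
    (A - B) ^ (p - 1) * (A ^ (1 - p) - B ^ (1 - p)) ≤ -((p - 1) / 2 * (log A - log B) ^ p) := by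
  have hA : 0 < A := by linarith
  set L := log A - log B with hL
  have hL0 : 0 ≤ L := by rw [hL]; linarith [Real.log_le_log hB hAB]
  have hAe : A = B * exp L := by rw [hL, exp_sub, exp_log hA, exp_log hB]; field_simp
  have h := aux_exp p L hp hL0
  have e1 : (A - B) ^ (p - 1) = B ^ (p - 1) * (exp L - 1) ^ (p - 1) := by
    rw [← Real.mul_rpow hB.le (by linarith [Real.add_one_le_exp L]), hAe]; ring_nf
  have e2 : A ^ (1 - p) = B ^ (1 - p) * exp (-((p - 1) * L)) := by
    rw [hAe, Real.mul_rpow hB.le (exp_pos _).le, ← Real.exp_mul]; ring_nf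
  have e3 : B ^ (p - 1) * B ^ (1 - p) = 1 := by
    rw [← Real.rpow_add hB]; simp
  rw [e1, e2]
  have : B ^ (p - 1) * (exp L - 1) ^ (p - 1) * (B ^ (1 - p) * exp (-((p - 1) * L)) - B ^ (1 - p))
    = (B ^ (p - 1) * B ^ (1 - p)) * -((exp L - 1) ^ (p - 1) * (1 - exp (-((p - 1) * L)))) := by ring
  rw [this, e3]; linarith

def C1 (p : ℝ) : ℝ := (p / (p - 1)) ^ (p - 1) * p

lemma C1_pos (p : ℝ) (hp : 1 < p) : 0 < C1 p := by
  have : 0 < p - 1 := by linarith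
  unfold C1; positivity

lemma cut_ineq (p A B ξ ζ : ℝ) (hp : 1 < p) (hB : 0 < B) (hAB : B ≤ A) (hξ : 0 ≤ ξ) (hζ : 0 ≤ ζ) :
    (A - B) ^ (p - 1) * (ξ ^ p * A ^ (1 - p) - ζ ^ p * B ^ (1 - p)) ≤ C1 p * |ξ - ζ| ^ p := by
  have hA : 0 < A := by linarith
  have hq : 0 < p - 1 := by linarith
  have hC := C1_pos p hp
  have hanti : A ^ (1 - p) ≤ B ^ (1 - p) :=
    Real.rpow_le_rpow_of_nonpos hB hAB (by linarith)
  have hAB0 : 0 ≤ (A - B) ^ (p - 1) := Real.rpow_nonneg (by linarith) _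
  have hζp : 0 ≤ ζ ^ p := by positivity
  by_cases hneg : ξ ^ p * A ^ (1 - p) - ζ ^ p * B ^ (1 - p) ≤ 0
  · exact (mul_nonpos_of_nonneg_of_nonpos hAB0 hneg).trans (by positivity)
  push Not at hneg
  have hA1 : 0 < A ^ (1 - p) := by positivity
  have hlt : ζ ^ p < ξ ^ p := by
    by_contra hh
    push Not at hh
    have : ξ ^ p * A ^ (1 - p) ≤ ζ ^ p * B ^ (1 - p) := mul_le_mul hh hanti hA1.le hζp
    linarith
  have hlt' : ζ < ξ := by
    by_contra hh
    push Not at hh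
    exact absurd (Real.rpow_le_rpow hξ hh (by linarith : 0 ≤ p)) (not_le.2 hlt)
  have hξ0 : 0 < ξ := by linarith
  set δ := (ξ - ζ) / ξ with hδ
  have hζδ : ζ = ξ * (1 - δ) := by rw [hδ]; field_simp; ring
  have hδ0 : 0 < δ := div_pos (by linarith) hξ0
  have hδ1 : δ ≤ 1 := by rw [hδ, div_le_one hξ0]; linarith
  -- bernoulli
  have hb1 : 1 - p * δ ≤ (1 - δ) ^ p := by
    have := one_add_mul_self_le_rpow_one_add (s := -δ) (by linarith) hp.le
    rw [← sub_eq_add_neg] at this; linarith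
  have hk : 1 ≤ p / (p - 1) := by rw [one_le_div hq]; linarith
  have hb2 : 1 - p / (p - 1) * δ ≤ (1 - δ) ^ (p / (p - 1)) := by
    have := one_add_mul_self_le_rpow_one_add (s := -δ) (by linarith) hk
    rw [← sub_eq_add_neg] at this; linarith
  have hτ : (A - B) / A ≤ p / (p - 1) * δ := by
    have h1 : (1 - δ) ^ p ≤ (B / A) ^ (p - 1) := by
      have e : (B / A) ^ (p - 1) = A ^ (1 - p) / B ^ (1 - p) := by
        rw [Real.div_rpow hB.le hA.le, show (1 - p) = -(p - 1) by ring, Real.rpow_neg hA.le,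
          Real.rpow_neg hB.le]
        field_simp
      rw [e, le_div_iff₀ (by positivity)]
      rw [hζδ, Real.mul_rpow hξ (by linarith)] at hneg
      have hx : 0 < ξ ^ p := by positivity
      by_contra hh
      push Not at hh
      nlinarith
    have h2 : (1 - δ) ^ (p / (p - 1)) ≤ B / A := by
      have := Real.rpow_le_rpow (by apply Real.rpow_nonneg; linarith) h1 (by positivity : 0 ≤ 1 / (p - 1))
      rw [← Real.rpow_mul (by linarith), ← Real.rpow_mul (by positivity)] at this
      rw [mul_one_div, mul_one_div_cancel hq.ne', Real.rpow_one] at this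
      exact this
    have : (A - B) / A = 1 - B / A := by field_simp
    linarith
  calc (A - B) ^ (p - 1) * (ξ ^ p * A ^ (1 - p) - ζ ^ p * B ^ (1 - p))
      ≤ (A - B) ^ (p - 1) * (A ^ (1 - p) * (ξ ^ p - ζ ^ p)) := by
        apply mul_le_mul_of_nonneg_left _ hAB0
        nlinarith
    _ = ((A - B) / A) ^ (p - 1) * (ξ ^ p * (1 - (1 - δ) ^ p)) := by
        rw [hζδ, Real.mul_rpow hξ (by linarith), Real.div_rpow (by linarith) hA.le,
          show (1 - p) = -(p - 1) by ring, Real.rpow_neg hA.le]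
        field_simp
    _ ≤ (p / (p - 1) * δ) ^ (p - 1) * (ξ ^ p * (p * δ)) := by
        have : (1 - δ) ^ p ≤ 1 := Real.rpow_le_one (by linarith) (by linarith) (by linarith)
        apply mul_le_mul (Real.rpow_le_rpow (div_nonneg (by linarith) hA.le) hτ hq.le)
        · apply mul_le_mul_of_nonneg_left _ (by positivity); linarith
        · apply mul_nonneg (by positivity); linarith
        · positivity
    _ = C1 p * |ξ - ζ| ^ p := by
        have e : ξ - ζ = ξ * δ := by rw [hζδ]; ring
        rw [e, abs_of_pos (by positivity), Real.mul_rpow hξ hδ0.le, Real.mul_rpow (by positivity) hδ0.le]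
        have : δ ^ p = δ ^ (p - 1) * δ := by rw [← Real.rpow_add_one hδ0.ne']; ring_nf
        rw [this, C1]; ring

lemma Hp_nonneg_eq (p t : ℝ) (hp : 1 < p) (ht : 0 ≤ t) : Hp p t = t ^ (p - 1) := by
  unfold Hp
  rw [abs_of_nonneg ht]
  rcases ht.eq_or_lt with h | h
  · rw [← h, Real.zero_rpow (by linarith : p - 1 ≠ 0)]; simp
  · rw [← Real.rpow_add_one h.ne']; ring_nf

lemma Hp_neg (p t : ℝ) : Hp p (-t) = - Hp p t := by
  unfold Hp; rw [abs_neg]; ring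

lemma Hp_abs (p t : ℝ) (hp : 1 < p) : |Hp p t| = |t| ^ (p - 1) := by
  rw [← Hp_nonneg_eq p |t| hp (abs_nonneg t)]
  unfold Hp; rw [abs_mul, abs_abs, abs_of_nonneg (by positivity : 0 ≤ |t| ^ (p-2))]

lemma Hp_nonpos (p t : ℝ) (ht : t ≤ 0) : Hp p t ≤ 0 := by
  unfold Hp; exact mul_nonpos_of_nonneg_of_nonpos (by positivity) ht

lemma Hp_cut (p A B ξ ζ : ℝ) (hp : 1 < p) (hA : 0 < A) (hB : 0 < B) (hξ : 0 ≤ ξ) (hζ : 0 ≤ ζ) :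
    Hp p (A - B) * (ξ ^ p * A ^ (1 - p) - ζ ^ p * B ^ (1 - p)) ≤ C1 p * |ξ - ζ| ^ p := by
  rcases le_total B A with h | h
  · rw [Hp_nonneg_eq _ _ hp (by linarith)]; exact cut_ineq p A B ξ ζ hp hB h hξ hζ
  · have := cut_ineq p B A ζ ξ hp hA h hζ hξ
    rw [← Hp_nonneg_eq _ _ hp (by linarith), abs_sub_comm] at this
    rw [← neg_sub B A, Hp_neg]; linarith

lemma Hp_log (p A B : ℝ) (hp : 1 < p) (hA : 0 < A) (hB : 0 < B) :
    Hp p (A - B) * (A ^ (1 - p) - B ^ (1 - p)) ≤ -((p - 1) / 2 * |log A - log B| ^ p) := by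
  rcases le_total B A with h | h
  · rw [Hp_nonneg_eq _ _ hp (by linarith), abs_of_nonneg (by linarith [Real.log_le_log hB h])]
    exact log_ineq p A B hp hB h
  · have := log_ineq p B A hp hA h
    rw [← Hp_nonneg_eq _ _ hp (by linarith)] at this
    rw [← neg_sub B A, Hp_neg, abs_sub_comm, abs_of_nonneg (by linarith [Real.log_le_log hA h])]; linarith

/-- case x in support, y outside -/
lemma Hp_far (p U W b ξ : ℝ) (hp : 1 < p) (hU : 0 ≤ U) (hb : 0 < b) (hξ : 0 ≤ ξ) :
    Hp p (U - W) * (ξ ^ p * (U + b) ^ (1 - p)) ≤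
      2 ^ (p - 1) * ξ ^ p + 2 ^ (p - 1) * (b ^ (1 - p) * (max (-W) 0 ^ (p - 1) * ξ ^ p)) := by
  have hq : 0 < p - 1 := by linarith
  have hm : 0 ≤ max (-W) 0 := le_max_right _ _
  have hx : 0 ≤ ξ ^ p := by positivity
  have hUb : 0 < U + b := by linarith
  rcases le_total (U - W) 0 with h | h
  · exact (mul_nonpos_of_nonpos_of_nonneg (Hp_nonpos p _ h) (by positivity)).trans (by positivity)
  rw [Hp_nonneg_eq _ _ hp h]
  set m := max (-W) 0
  have h1 : (U - W) ^ (p - 1) ≤ 2 ^ (p - 1) * (U + b) ^ (p - 1) + 2 ^ (p - 1) * m ^ (p - 1) := by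
    have hWm : -W ≤ m := le_max_left _ _
    rcases le_total (U + b) m with h2 | h2
    · have : (U - W) ^ (p - 1) ≤ (2 * m) ^ (p - 1) := Real.rpow_le_rpow h (by linarith) hq.le
      rw [Real.mul_rpow (by norm_num) hm] at this
      have : 0 ≤ (2:ℝ) ^ (p - 1) * (U + b) ^ (p - 1) := by positivity
      linarith
    · have : (U - W) ^ (p - 1) ≤ (2 * (U + b)) ^ (p - 1) := Real.rpow_le_rpow h (by linarith) hq.le
      rw [Real.mul_rpow (by norm_num) hUb.le] at this
      have : 0 ≤ (2:ℝ) ^ (p - 1) * m ^ (p - 1) := by positivity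
      linarith
  have e : (U + b) ^ (p - 1) * (U + b) ^ (1 - p) = 1 := by rw [← Real.rpow_add hUb]; simp
  have h3 : (U + b) ^ (1 - p) ≤ b ^ (1 - p) :=
    Real.rpow_le_rpow_of_nonpos hb (by linarith) (by linarith)
  calc _ ≤ (2 ^ (p - 1) * (U + b) ^ (p - 1) + 2 ^ (p - 1) * m ^ (p - 1)) * (ξ ^ p * (U + b) ^ (1 - p)) :=
        mul_le_mul_of_nonneg_right h1 (by positivity)
    _ = 2 ^ (p - 1) * ξ ^ p * ((U + b) ^ (p - 1) * (U + b) ^ (1 - p)) + 2 ^ (p - 1) * m ^ (p - 1) * ξ ^ p * (U + b) ^ (1 - p) := by ring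
    _ ≤ 2 ^ (p - 1) * ξ ^ p * 1 + 2 ^ (p - 1) * m ^ (p - 1) * ξ ^ p * b ^ (1 - p) := by
        rw [e]; gcongr
    _ = _ := by ring


lemma rpow_neg_lip (p b A B : ℝ) (hp : 1 < p) (hb : 0 < b) (hA : b ≤ A) (hB : b ≤ B) :
    |A ^ (1 - p) - B ^ (1 - p)| ≤ (p - 1) * b ^ (-p) * |A - B| := by
  have := (convex_Ici b).norm_image_sub_le_of_norm_hasDerivWithin_le
    (f := fun t : ℝ => t ^ (1 - p)) (f' := fun t => (1 - p) * t ^ (1 - p - 1))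
    (C := (p - 1) * b ^ (-p)) (x := B) (y := A)
    (fun t ht => (Real.hasDerivAt_rpow_const (Or.inl (hb.trans_le ht).ne')).hasDerivWithinAt)
    (fun t ht => by
      have ht0 : 0 < t := hb.trans_le ht
      rw [norm_mul, Real.norm_eq_abs, Real.norm_eq_abs, abs_of_neg (by linarith : 1 - p < 0),
        abs_of_pos (by positivity), show 1 - p - 1 = -p by ring, neg_sub]
      exact mul_le_mul_of_nonneg_left
        (Real.rpow_le_rpow_of_nonpos hb ht (by linarith)) (by linarith)) hB hA
  simpa [Real.norm_eq_abs] using this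

lemma rpow_lip (p A B : ℝ) (hp : 1 < p) (hA : A ∈ Icc (0:ℝ) 1) (hB : B ∈ Icc (0:ℝ) 1) :
    |A ^ p - B ^ p| ≤ p * |A - B| := by
  have := (convex_Icc (0:ℝ) 1).norm_image_sub_le_of_norm_hasDerivWithin_le
    (f := fun t : ℝ => t ^ p) (f' := fun t => p * t ^ (p - 1))
    (C := p) (x := B) (y := A)
    (fun t ht => (Real.hasDerivAt_rpow_const (Or.inr hp.le)).hasDerivWithinAt)
    (fun t ht => by
      have h0 := ht.1
      rw [norm_mul, Real.norm_eq_abs, Real.norm_eq_abs, abs_of_pos (by linarith : 0 < p),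
        abs_of_nonneg (by positivity)]
      have := Real.rpow_le_one h0 ht.2 (by linarith : 0 ≤ p - 1)
      nlinarith) hB hA
  simpa [Real.norm_eq_abs] using this

lemma log_lip (b A B : ℝ) (hb : 0 < b) (hA : b ≤ A) (hB : b ≤ B) :
    |log A - log B| ≤ b⁻¹ * |A - B| := by
  wlog h : B ≤ A generalizing A B
  · have := this B A hB hA (by linarith)
    rwa [abs_sub_comm, abs_sub_comm A B]
  have hB0 : 0 < B := by linarith
  have hA0 : 0 < A := by linarith
  rw [abs_of_nonneg (by linarith [Real.log_le_log hB0 h]), abs_of_nonneg (by linarith),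
    ← Real.log_div hA0.ne' hB0.ne']
  have h1 := Real.log_le_sub_one_of_pos (div_pos hA0 hB0)
  have h2 : A / B - 1 = B⁻¹ * (A - B) := by field_simp
  have h3 : B⁻¹ ≤ b⁻¹ := inv_anti₀ hb hB
  have : B⁻¹ * (A - B) ≤ b⁻¹ * (A - B) := mul_le_mul_of_nonneg_right h3 (by linarith)
  linarith

section eta
variable {n : ℕ}

def eta (x₀ : Rn n) (r : ℝ) (x : Rn n) : ℝ := min 1 (max 0 (3 - 2 / r * ‖x - x₀‖))

lemma eta_nonneg (x₀ : Rn n) (r : ℝ) (x : Rn n) : 0 ≤ eta x₀ r x :=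
  le_min zero_le_one (le_max_left _ _)

lemma eta_le_one (x₀ : Rn n) (r : ℝ) (x : Rn n) : eta x₀ r x ≤ 1 := min_le_left _ _

lemma eta_mem (x₀ : Rn n) (r : ℝ) (x : Rn n) : eta x₀ r x ∈ Icc (0:ℝ) 1 :=
  ⟨eta_nonneg _ _ _, eta_le_one _ _ _⟩

lemma eta_eq_one {x₀ : Rn n} {r : ℝ} {x : Rn n} (hr : 0 < r) (hx : x ∈ ball x₀ r) :
    eta x₀ r x = 1 := by
  rw [mem_ball_iff_norm] at hx
  unfold eta
  have : 2 / r * ‖x - x₀‖ ≤ 2 := by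
    rw [div_mul_eq_mul_div, div_le_iff₀ hr]; linarith
  rw [min_eq_left]
  exact le_max_of_le_right (by linarith)

lemma eta_eq_zero {x₀ : Rn n} {r : ℝ} {x : Rn n} (hr : 0 < r) (hx : x ∉ ball x₀ (3 / 2 * r)) :
    eta x₀ r x = 0 := by
  rw [mem_ball_iff_norm, not_lt] at hx
  unfold eta
  have : 3 ≤ 2 / r * ‖x - x₀‖ := by
    rw [div_mul_eq_mul_div, le_div_iff₀ hr]; linarith
  rw [max_eq_left (by linarith)]; simp

lemma eta_lip (x₀ : Rn n) (r : ℝ) (hr : 0 < r) (x y : Rn n) :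
    |eta x₀ r x - eta x₀ r y| ≤ 2 / r * ‖x - y‖ := by
  unfold eta
  have h1 := abs_min_sub_min_le_max 1 (max 0 (3 - 2 / r * ‖x - x₀‖)) 1 (max 0 (3 - 2 / r * ‖y - x₀‖))
  have h2 := abs_max_sub_max_le_max 0 (3 - 2 / r * ‖x - x₀‖) 0 (3 - 2 / r * ‖y - x₀‖)
  simp only [sub_self, abs_zero] at h1 h2
  replace h1 := h1.trans_eq (max_eq_right (abs_nonneg _))
  replace h2 := h2.trans_eq (max_eq_right (abs_nonneg _))
  refine h1.trans (h2.trans ?_)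
  have h3 := abs_norm_sub_norm_le (y - x₀) (x - x₀)
  rw [show 3 - 2 / r * ‖x - x₀‖ - (3 - 2 / r * ‖y - x₀‖) = 2 / r * (‖y - x₀‖ - ‖x - x₀‖) by ring,
    abs_mul, abs_of_pos (by positivity)]
  rw [sub_sub_sub_cancel_right, norm_sub_rev y x] at h3
  gcongr

lemma eta_sub_le_one (x₀ : Rn n) (r : ℝ) (x y : Rn n) :
    |eta x₀ r x - eta x₀ r y| ≤ 1 := by
  have h1 := eta_mem x₀ r x
  have h2 := eta_mem x₀ r y
  rw [abs_le]; constructor <;> linarith [h1.1, h1.2, h2.1, h2.2]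

lemma eta_meas (x₀ : Rn n) (r : ℝ) : Measurable (eta x₀ r) := by
  unfold eta; fun_prop

def phi (p b : ℝ) (u : Rn n → ℝ) (x₀ : Rn n) (r : ℝ) (x : Rn n) : ℝ :=
  eta x₀ r x ^ p * (|u x| + b) ^ (1 - p)

lemma phi_nonneg (p b : ℝ) (hb : 0 < b) (u : Rn n → ℝ) (x₀ : Rn n) (r : ℝ) (x : Rn n) :
    0 ≤ phi p b u x₀ r x := by
  have := eta_nonneg x₀ r x
  unfold phi; positivity

lemma phi_le (p b : ℝ) (hp : 1 < p) (hb : 0 < b) (u : Rn n → ℝ) (x₀ : Rn n) (r : ℝ) (x : Rn n) :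
    phi p b u x₀ r x ≤ b ^ (1 - p) := by
  unfold phi
  have h1 : eta x₀ r x ^ p ≤ 1 := Real.rpow_le_one (eta_nonneg _ _ _) (eta_le_one _ _ _) (by linarith)
  have h2 : (|u x| + b) ^ (1 - p) ≤ b ^ (1 - p) :=
    Real.rpow_le_rpow_of_nonpos hb (by linarith [abs_nonneg (u x)]) (by linarith)
  calc _ ≤ 1 * b ^ (1 - p) := mul_le_mul h1 h2 (by positivity) zero_le_one
    _ = _ := one_mul _

lemma phi_meas (p b : ℝ) (u : Rn n → ℝ) (hu : Measurable u) (x₀ : Rn n) (r : ℝ) :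
    Measurable (phi p b u x₀ r) := by
  have := eta_meas x₀ r
  unfold phi; fun_prop

lemma phi_eq_zero {p b : ℝ} (hp : 1 < p) {u : Rn n → ℝ} {x₀ : Rn n} {r : ℝ} {x : Rn n} (hr : 0 < r)
    (hx : x ∉ ball x₀ (3 / 2 * r)) : phi p b u x₀ r x = 0 := by
  unfold phi; rw [eta_eq_zero hr hx, Real.zero_rpow (by linarith), zero_mul]

lemma phi_sub (p b : ℝ) (hp : 1 < p) (hb : 0 < b) (u : Rn n → ℝ) (x₀ : Rn n) (r : ℝ) (x y : Rn n) :
    |phi p b u x₀ r x - phi p b u x₀ r y| ≤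
      (p - 1) * b ^ (-p) * |u x - u y| + p * b ^ (1 - p) * |eta x₀ r x - eta x₀ r y| := by
  have h1 := rpow_neg_lip p b (|u x| + b) (|u y| + b) hp hb (by linarith [abs_nonneg (u x)])
    (by linarith [abs_nonneg (u y)])
  have h2 := rpow_lip p _ _ hp (eta_mem x₀ r x) (eta_mem x₀ r y)
  have h3 : (|u y| + b) ^ (1 - p) ≤ b ^ (1 - p) :=
    Real.rpow_le_rpow_of_nonpos hb (by linarith [abs_nonneg (u y)]) (by linarith)
  have h4 : eta x₀ r x ^ p ≤ 1 := Real.rpow_le_one (eta_nonneg _ _ _) (eta_le_one _ _ _) (by linarith)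
  have h5 : |(|u x| + b) - (|u y| + b)| ≤ |u x - u y| := by
    rw [add_sub_add_right_eq_sub]; exact abs_abs_sub_abs_le_abs_sub _ _
  have h0 : 0 ≤ eta x₀ r x ^ p := Real.rpow_nonneg (eta_nonneg _ _ _) _
  have e : phi p b u x₀ r x - phi p b u x₀ r y =
    eta x₀ r x ^ p * ((|u x| + b) ^ (1 - p) - (|u y| + b) ^ (1 - p)) +
      (eta x₀ r x ^ p - eta x₀ r y ^ p) * (|u y| + b) ^ (1 - p) := by unfold phi; ring
  have hp1 : 0 < p - 1 := by linarith
  rw [e]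
  refine (abs_add_le _ _).trans ?_
  rw [abs_mul, abs_mul, abs_of_nonneg h0, abs_of_pos (by positivity : 0 < (|u y| + b) ^ (1 - p))]
  apply add_le_add
  · calc _ ≤ 1 * ((p - 1) * b ^ (-p) * |u x - u y|) := by
          apply mul_le_mul h4 (h1.trans _) (abs_nonneg _) zero_le_one
          gcongr
      _ = _ := one_mul _
  · calc _ ≤ (p * |eta x₀ r x - eta x₀ r y|) * b ^ (1 - p) := by
          apply mul_le_mul h2 h3 (by positivity) (by positivity)
      _ = _ := by ring

lemma pw1 (p b R r : ℝ) (hp : 1 < p) (hb : 0 < b) (hr : 0 < r) (hrR : r < R / 2)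
    (u : Rn n → ℝ) (x₀ : Rn n) (hu : ∀ x ∈ ball x₀ R, 0 ≤ u x) (x y : Rn n) :
    Hp p (u x - u y) * (phi p b u x₀ r x - phi p b u x₀ r y) ≤
      (C1 p + 2 ^ (p - 1)) * |eta x₀ r x - eta x₀ r y| ^ p +
      2 ^ (p - 1) * (b ^ (1 - p) * (minusPart u y ^ (p - 1) * eta x₀ r x ^ p)) +
      2 ^ (p - 1) * (b ^ (1 - p) * (minusPart u x ^ (p - 1) * eta x₀ r y ^ p)) := by
  have hC := C1_pos p hp
  have hx0 := eta_nonneg x₀ r x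
  have hy0 := eta_nonneg x₀ r y
  have hmx : 0 ≤ minusPart u x := le_max_right _ _
  have hmy : 0 ≤ minusPart u y := le_max_right _ _
  have hsub : ball x₀ (3 / 2 * r) ⊆ ball x₀ R := ball_subset_ball (by linarith)
  have P1 : 0 ≤ 2 ^ (p - 1) * (b ^ (1 - p) * (minusPart u y ^ (p - 1) * eta x₀ r x ^ p)) := by positivity
  have P2 : 0 ≤ 2 ^ (p - 1) * (b ^ (1 - p) * (minusPart u x ^ (p - 1) * eta x₀ r y ^ p)) := by positivity
  have P3 : 0 ≤ C1 p * |eta x₀ r x - eta x₀ r y| ^ p := by positivity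
  have P4 : 0 ≤ 2 ^ (p - 1) * |eta x₀ r x - eta x₀ r y| ^ p := by positivity
  by_cases hx : x ∈ ball x₀ R <;> by_cases hy : y ∈ ball x₀ R
  · have := Hp_cut p (u x + b) (u y + b) _ _ hp (by linarith [hu x hx]) (by linarith [hu y hy]) hx0 hy0
    rw [add_sub_add_right_eq_sub] at this
    unfold phi
    rw [abs_of_nonneg (hu x hx), abs_of_nonneg (hu y hy)]
    linarith
  · have hy' : y ∉ ball x₀ (3 / 2 * r) := fun h => hy (hsub h)
    rw [phi_eq_zero hp hr hy', sub_zero]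
    have := Hp_far p (u x) (u y) b _ hp (hu x hx) hb hx0
    have e : |eta x₀ r x - eta x₀ r y| ^ p = eta x₀ r x ^ p := by
      rw [eta_eq_zero hr hy', sub_zero, abs_of_nonneg hx0]
    rw [e] at P3 P4 ⊢
    unfold phi
    rw [abs_of_nonneg (hu x hx)]
    change _ ≤ _ + 2 ^ (p - 1) * (b ^ (1 - p) * (minusPart u y ^ (p - 1) * eta x₀ r x ^ p)) at this
    linarith
  · have hx' : x ∉ ball x₀ (3 / 2 * r) := fun h => hx (hsub h)
    rw [phi_eq_zero hp hr hx', zero_sub]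
    have := Hp_far p (u y) (u x) b _ hp (hu y hy) hb hy0
    have e : |eta x₀ r x - eta x₀ r y| ^ p = eta x₀ r y ^ p := by
      rw [eta_eq_zero hr hx', zero_sub, abs_neg, abs_of_nonneg hy0]
    rw [e] at P3 P4 ⊢
    rw [← neg_sub, Hp_neg, neg_mul_neg]
    unfold phi
    rw [abs_of_nonneg (hu y hy)]
    change _ ≤ _ + 2 ^ (p - 1) * (b ^ (1 - p) * (minusPart u x ^ (p - 1) * eta x₀ r y ^ p)) at this
    linarith
  · have hy' : y ∉ ball x₀ (3 / 2 * r) := fun h => hy (hsub h)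
    have hx' : x ∉ ball x₀ (3 / 2 * r) := fun h => hx (hsub h)
    rw [phi_eq_zero hp hr hx', phi_eq_zero hp hr hy', sub_zero, mul_zero]
    linarith

def vb (a b d : ℝ) (u : Rn n → ℝ) : Rn n → ℝ :=
  fun x => min (max (Real.log ((a + b) / (u x + b))) 0) d

lemma vb_sub (a b d : ℝ) (u : Rn n → ℝ) (ha : 0 < a) (hb : 0 < b) (x y : Rn n) (hx : 0 ≤ u x)
    (hy : 0 ≤ u y) : |vb a b d u x - vb a b d u y| ≤ |log (u x + b) - log (u y + b)| := by
  unfold vb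
  have h1 := abs_min_sub_min_le_max (max (Real.log ((a + b) / (u x + b))) 0) d (max (Real.log ((a + b) / (u y + b))) 0) d
  have h2 := abs_max_sub_max_le_max (Real.log ((a + b) / (u x + b))) 0 (Real.log ((a + b) / (u y + b))) 0
  simp only [sub_self, abs_zero] at h1 h2
  replace h1 := h1.trans_eq (max_eq_left (abs_nonneg _))
  replace h2 := h2.trans_eq (max_eq_left (abs_nonneg _))
  refine h1.trans (h2.trans ?_)
  rw [Real.log_div (by positivity) (by positivity), Real.log_div (by positivity) (by positivity),
    abs_sub_comm]
  refine le_of_eq (congrArg abs ?_)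
  ring

lemma pw2 (p a b d R r : ℝ) (hp : 1 < p) (ha : 0 < a) (hb : 0 < b) (hr : 0 < r) (hrR : r < R / 2)
    (u : Rn n → ℝ) (x₀ : Rn n) (hu : ∀ x ∈ ball x₀ R, 0 ≤ u x) (x y : Rn n)
    (hx : x ∈ ball x₀ r) (hy : y ∈ ball x₀ r) :
    Hp p (u x - u y) * (phi p b u x₀ r x - phi p b u x₀ r y) ≤
      -((p - 1) / 2 * |vb a b d u x - vb a b d u y| ^ p) := by
  have hsub : ball x₀ r ⊆ ball x₀ R := ball_subset_ball (by linarith)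
  have hux := hu x (hsub hx)
  have huy := hu y (hsub hy)
  have h := Hp_log p (u x + b) (u y + b) hp (by linarith) (by linarith)
  have h2 := Real.rpow_le_rpow (abs_nonneg _) (vb_sub a b d u ha hb x y hux huy) (by linarith : 0 ≤ p)
  unfold phi
  rw [abs_of_nonneg hux, abs_of_nonneg huy, eta_eq_one hr hx, eta_eq_one hr hy, Real.one_rpow,
    one_mul, one_mul]
  rw [add_sub_add_right_eq_sub] at h
  have : (p - 1) / 2 * |vb a b d u x - vb a b d u y| ^ p ≤ (p - 1) / 2 * |log (u x + b) - log (u y + b)| ^ p :=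
    mul_le_mul_of_nonneg_left h2 (by linarith)
  linarith

/-- combined kernel bound -/
lemma pw3 (s lam Lam p a b d R r : ℝ) (hp : 1 < p) (hs : 0 < s) (hs1 : s < 1) (hlam : 0 < lam)
    (hLam : lam ≤ Lam) (ha : 0 < a) (hb : 0 < b) (hr : 0 < r) (hrR : r < R / 2)
    (K : Rn n → ℝ) (hK : KernelClass n p s lam Lam K) (hc : 0 < cnps n p s)
    (u : Rn n → ℝ) (x₀ : Rn n) (hu : ∀ x ∈ ball x₀ R, 0 ≤ u x) (z : Rn n × Rn n) :
    Hp p (u z.1 - u z.2) * (phi p b u x₀ r z.1 - phi p b u x₀ r z.2) * K (z.1 - z.2) ≤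
      cnps n p s * Lam * (C1 p + 2 ^ (p - 1)) * gagliardoIntegrand n p s (eta x₀ r) z +
      cnps n p s * Lam * 2 ^ (p - 1) * b ^ (1 - p) * 4 ^ ((n:ℝ) + p * s) *
      ((ball x₀ (3 / 2 * r)).indicator 1 z.1 *
        (ball x₀ R)ᶜ.indicator (fun y => |minusPart u y| ^ (p - 1) * ‖y - x₀‖ ^ (-(n : ℝ) - p * s)) z.2 +
       (ball x₀ R)ᶜ.indicator (fun y => |minusPart u y| ^ (p - 1) * ‖y - x₀‖ ^ (-(n : ℝ) - p * s)) z.1 *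
       (ball x₀ (3 / 2 * r)).indicator 1 z.2) -
      cnps n p s * lam * ((p - 1) / 2) *
        (ball x₀ r ×ˢ ball x₀ r).indicator (gagliardoIntegrand n p s (vb a b d u)) z := by
  obtain ⟨x, y⟩ := z
  simp only
  set w := ‖x - y‖ ^ (-(n : ℝ) - p * s) with hw
  have hw0 : 0 ≤ w := by positivity
  have hC := C1_pos p hp
  have hLam0 : 0 < Lam := by linarith
  set H := (ball x₀ R)ᶜ.indicator (fun y => |minusPart u y| ^ (p - 1) * ‖y - x₀‖ ^ (-(n : ℝ) - p * s)) with hH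
  set G : Rn n → ℝ := (ball x₀ (3 / 2 * r)).indicator 1 with hG
  have hH0 : ∀ y, 0 ≤ H y := fun y => indicator_nonneg (fun _ _ => by positivity) y
  have hG0 : ∀ y, 0 ≤ G y := fun y => indicator_nonneg (fun _ _ => zero_le_one) y
  have hgag : 0 ≤ gagliardoIntegrand n p s (eta x₀ r) (x, y) := by
    unfold gagliardoIntegrand; positivity
  have hHG : ∀ x y : Rn n, (minusPart u y ^ (p - 1) * eta x₀ r x ^ p) * ‖x - y‖ ^ (-(n : ℝ) - p * s) ≤
      4 ^ ((n:ℝ) + p * s) * (G x * H y) := by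
    intro x y
    have hm0 : 0 ≤ minusPart u y := le_max_right _ _
    have he0 := eta_nonneg x₀ r x
    have hR : 0 ≤ 4 ^ ((n:ℝ) + p * s) * (G x * H y) :=
      mul_nonneg (by positivity) (mul_nonneg (hG0 x) (hH0 y))
    by_cases hx : x ∈ ball x₀ (3 / 2 * r)
    · by_cases hy : y ∈ ball x₀ R
      · have : minusPart u y = 0 := max_eq_right (by linarith [hu y hy])
        rw [this, Real.zero_rpow (by linarith)]; simpa using hR
      · rw [hG, hH, indicator_of_mem hx, indicator_of_mem (by simpa using hy)]
        rw [abs_of_nonneg hm0, Pi.one_apply, one_mul]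
        rw [mem_ball_iff_norm] at hx hy
        push Not at hy
        have hd : ‖y - x₀‖ / 4 ≤ ‖x - y‖ := by
          have := norm_sub_norm_le (y - x₀) (x - x₀)
          rw [sub_sub_sub_cancel_right, norm_sub_rev y x] at this
          linarith
        have hy0 : 0 < ‖y - x₀‖ := by linarith
        have h1 : ‖x - y‖ ^ (-(n : ℝ) - p * s) ≤ (‖y - x₀‖ / 4) ^ (-(n : ℝ) - p * s) :=
          Real.rpow_le_rpow_of_nonpos (by positivity) hd (by have : 0 < p * s := by positivity
                                                             have : (0:ℝ) ≤ n := by positivity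
                                                             linarith)
        have h2 : (‖y - x₀‖ / 4) ^ (-(n : ℝ) - p * s) = 4 ^ ((n:ℝ) + p * s) * ‖y - x₀‖ ^ (-(n : ℝ) - p * s) := by
          rw [Real.div_rpow hy0.le (by norm_num), show -(n:ℝ) - p * s = -((n:ℝ) + p * s) by ring,
            Real.rpow_neg (by norm_num : (0:ℝ) ≤ 4)]
          field_simp
        have h4 : eta x₀ r x ^ p ≤ 1 := Real.rpow_le_one he0 (eta_le_one _ _ _) (by linarith)
        calc _ ≤ (minusPart u y ^ (p - 1) * 1) * (4 ^ ((n:ℝ) + p * s) * ‖y - x₀‖ ^ (-(n : ℝ) - p * s)) := by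
              rw [← h2]; gcongr
          _ = _ := by ring
    · rw [eta_eq_zero hr hx, Real.zero_rpow (by linarith)]; simpa using hR
  have hsum0 : 0 ≤ cnps n p s * Lam * 2 ^ (p - 1) * b ^ (1 - p) * 4 ^ ((n:ℝ) + p * s) *
      (G x * H y + H x * G y) :=
    mul_nonneg (by positivity) (add_nonneg (mul_nonneg (hG0 x) (hH0 y)) (mul_nonneg (hH0 x) (hG0 y)))
  have hA0 : 0 ≤ cnps n p s * Lam * (C1 p + 2 ^ (p - 1)) * gagliardoIntegrand n p s (eta x₀ r) (x, y) := by
    positivity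
  by_cases hxy : x = y
  · subst hxy
    have : (ball x₀ r ×ˢ ball x₀ r).indicator (gagliardoIntegrand n p s (vb a b d u)) (x, x) = 0 := by
      apply indicator_apply_eq_zero.2
      intro _
      unfold gagliardoIntegrand
      simp [Real.zero_rpow (by linarith : p ≠ 0)]
    rw [this]; simp only [sub_self, mul_zero, zero_mul, sub_zero]
    linarith
  obtain ⟨-, -, hKb⟩ := hK
  obtain ⟨hK1, hK2⟩ := hKb (x - y) (sub_ne_zero.2 hxy)
  rw [← hw] at hK1 hK2
  have hK0 : 0 ≤ K (x - y) := le_trans (by positivity) hK1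
  by_cases hB : (x, y) ∈ ball x₀ r ×ˢ ball x₀ r
  · rw [indicator_of_mem hB]
    have h := pw2 p a b d R r hp ha hb hr hrR u x₀ hu x y hB.1 hB.2
    set F := Hp p (u x - u y) * (phi p b u x₀ r x - phi p b u x₀ r y)
    set t := |vb a b d u x - vb a b d u y| ^ p with ht
    have ht0 : 0 ≤ t := by positivity
    have hp2 : 0 < (p - 1) / 2 := by linarith
    have h1 : F * K (x - y) ≤ -((p - 1) / 2 * t) * (cnps n p s * lam * w) := by
      calc F * K (x - y) ≤ -((p - 1) / 2 * t) * K (x - y) := mul_le_mul_of_nonneg_right h hK0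
        _ ≤ _ := mul_le_mul_of_nonpos_left hK1 (by have := mul_nonneg hp2.le ht0; linarith)
    have e : gagliardoIntegrand n p s (vb a b d u) (x, y) = t * w := rfl
    rw [e]
    have : -((p - 1) / 2 * t) * (cnps n p s * lam * w) = - (cnps n p s * lam * ((p - 1) / 2) * (t * w)) := by ring
    linarith
  · rw [indicator_of_notMem hB, mul_zero, sub_zero]
    have h := pw1 p b R r hp hb hr hrR u x₀ hu x y
    have hq1 := hHG x y
    have hq2 := hHG y x
    rw [norm_sub_rev y x] at hq2
    rw [← hw] at hq1 hq2
    set F := Hp p (u x - u y) * (phi p b u x₀ r x - phi p b u x₀ r y)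
    have e : gagliardoIntegrand n p s (eta x₀ r) (x, y) = |eta x₀ r x - eta x₀ r y| ^ p * w := rfl
    rw [e]
    have hmx : 0 ≤ minusPart u x := le_max_right _ _
    have hmy : 0 ≤ minusPart u y := le_max_right _ _
    have hx0 := eta_nonneg x₀ r x
    have hy0 := eta_nonneg x₀ r y
    set P := (C1 p + 2 ^ (p - 1)) * |eta x₀ r x - eta x₀ r y| ^ p +
      2 ^ (p - 1) * (b ^ (1 - p) * (minusPart u y ^ (p - 1) * eta x₀ r x ^ p)) +
      2 ^ (p - 1) * (b ^ (1 - p) * (minusPart u x ^ (p - 1) * eta x₀ r y ^ p)) with hP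
    have hP0 : 0 ≤ P := by positivity
    have hk0 : 0 ≤ cnps n p s * Lam * 2 ^ (p - 1) * b ^ (1 - p) := by positivity
    calc F * K (x - y) ≤ P * K (x - y) := mul_le_mul_of_nonneg_right h hK0
      _ ≤ P * (cnps n p s * Lam * w) := mul_le_mul_of_nonneg_left hK2 hP0
      _ = cnps n p s * Lam * (C1 p + 2 ^ (p - 1)) * (|eta x₀ r x - eta x₀ r y| ^ p * w) +
          cnps n p s * Lam * 2 ^ (p - 1) * b ^ (1 - p) *
          (minusPart u y ^ (p - 1) * eta x₀ r x ^ p * w + minusPart u x ^ (p - 1) * eta x₀ r y ^ p * w) := by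
            rw [hP]; ring
      _ ≤ cnps n p s * Lam * (C1 p + 2 ^ (p - 1)) * (|eta x₀ r x - eta x₀ r y| ^ p * w) +
          cnps n p s * Lam * 2 ^ (p - 1) * b ^ (1 - p) *
          (4 ^ ((n:ℝ) + p * s) * (G x * H y) + 4 ^ ((n:ℝ) + p * s) * (G y * H x)) := by
            gcongr
      _ = _ := by ring

end eta


section kap
variable {n : ℕ}

def kap (n : ℕ) (p s r : ℝ) (h : Rn n) : ℝ := (min 1 (2 / r * ‖h‖)) ^ p * ‖h‖ ^ (-(n : ℝ) - p * s)

lemma kap_nonneg (p s r : ℝ) (hr : 0 < r) (h : Rn n) : 0 ≤ kap n p s r h := by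
  unfold kap
  have : 0 ≤ min 1 (2 / r * ‖h‖) := le_min zero_le_one (by positivity)
  positivity

lemma kap_one_int (hn : 1 ≤ n) (p s : ℝ) (hp : 1 < p) (hs : 0 < s) (hs1 : s < 1) :
    Integrable (kap n p s 1) (volume : Measure (Rn n)) := by
  have : Nonempty (Fin n) := ⟨⟨0, hn⟩⟩
  have hnt : Nontrivial (Rn n) := inferInstance
  have key := integrable_fun_norm_addHaar (volume : Measure (Rn n))
    (f := fun t : ℝ => (min 1 (2 / 1 * t)) ^ p * t ^ (-(n : ℝ) - p * s))
  refine key.2 ?_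
  rw [finrank_euclideanSpace_fin, ← Ioc_union_Ioi_eq_Ioi (zero_le_one (α := ℝ))]
  have hps : 0 < p * s := by positivity
  have hmeas : Measurable fun y : ℝ => y ^ (n - 1) • (min 1 (2 / 1 * y) ^ p * y ^ (-(n : ℝ) - p * s)) := by
    fun_prop
  have hcast : ((n - 1 : ℕ) : ℝ) = n - 1 := by push_cast [hn]; ring
  apply IntegrableOn.union
  · have h1 : IntegrableOn (fun y : ℝ => 2 ^ p * y ^ (p * (1 - s) - 1)) (Ioc 0 1) := by
      apply Integrable.const_mul
      have := (intervalIntegral.intervalIntegrable_rpow' (a := 0) (b := 1) (r := p * (1 - s) - 1)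
        (by have : 0 < p * (1 - s) := mul_pos (by linarith) (by linarith)
            linarith))
      rwa [intervalIntegrable_iff_integrableOn_Ioc_of_le zero_le_one] at this
    refine Integrable.mono' h1 hmeas.aestronglyMeasurable ?_
    filter_upwards [ae_restrict_mem measurableSet_Ioc] with y hy
    have hy0 : 0 < y := hy.1
    have hm : 0 ≤ min 1 (2 / 1 * y) := le_min zero_le_one (by positivity)
    rw [smul_eq_mul, Real.norm_of_nonneg (by positivity)]
    have h2 : min 1 (2 / 1 * y) ^ p ≤ (2 * y) ^ p :=
      Real.rpow_le_rpow hm ((min_le_right _ _).trans (by simp)) (by linarith)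
    calc _ ≤ y ^ (n - 1) * ((2 * y) ^ p * y ^ (-(n : ℝ) - p * s)) := by gcongr
      _ = 2 ^ p * (y ^ ((n - 1 : ℕ) : ℝ) * y ^ p * y ^ (-(n : ℝ) - p * s)) := by
        rw [Real.mul_rpow (by norm_num) hy0.le, Real.rpow_natCast]; ring
      _ = _ := by
        rw [← Real.rpow_add hy0, ← Real.rpow_add hy0, hcast]; congr 2; ring
  · have h1 : IntegrableOn (fun y : ℝ => y ^ (-1 - p * s)) (Ioi 1) :=
      integrableOn_Ioi_rpow_of_lt (by linarith) one_pos
    refine Integrable.mono' h1 hmeas.aestronglyMeasurable ?_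
    filter_upwards [ae_restrict_mem measurableSet_Ioi] with y hy
    have hy0 : 0 < y := zero_lt_one.trans hy
    have hm : 0 ≤ min 1 (2 / 1 * y) := le_min zero_le_one (by positivity)
    rw [smul_eq_mul, Real.norm_of_nonneg (by positivity)]
    have h2 : min 1 (2 / 1 * y) ^ p ≤ 1 := Real.rpow_le_one hm (min_le_left _ _) (by linarith)
    calc _ ≤ y ^ (n - 1) * (1 * y ^ (-(n : ℝ) - p * s)) := by gcongr
      _ = (y ^ ((n - 1 : ℕ) : ℝ) * y ^ (-(n : ℝ) - p * s)) := by
        rw [Real.rpow_natCast]; ring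
      _ = _ := by
        rw [← Real.rpow_add hy0, hcast]; congr 1; ring

def MM (n : ℕ) (p s : ℝ) : ℝ := ∫ h, kap n p s 1 h

lemma MM_nonneg (p s : ℝ) : 0 ≤ MM n p s := integral_nonneg (kap_nonneg p s 1 one_pos)

lemma kap_scale (p s r : ℝ) (hr : 0 < r) (h : Rn n) :
    kap n p s r h = r ^ (-(n : ℝ) - p * s) * kap n p s 1 (r⁻¹ • h) := by
  unfold kap
  rw [norm_smul, norm_inv, Real.norm_of_nonneg hr.le, Real.mul_rpow (by positivity) (by positivity),
    Real.inv_rpow hr.le]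
  have : r ^ (-(n : ℝ) - p * s) ≠ 0 := by positivity
  field_simp

lemma kap_int (hn : 1 ≤ n) (p s r : ℝ) (hp : 1 < p) (hs : 0 < s) (hs1 : s < 1) (hr : 0 < r) :
    Integrable (kap n p s r) (volume : Measure (Rn n)) := by
  have : kap n p s r = fun h => r ^ (-(n : ℝ) - p * s) * kap n p s 1 (r⁻¹ • h) :=
    funext (kap_scale p s r hr)
  rw [this]
  exact ((kap_one_int hn p s hp hs hs1).comp_smul (inv_ne_zero hr.ne')).const_mul _

lemma kap_integral (p s r : ℝ) (hr : 0 < r) :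
    ∫ h, kap n p s r h = r ^ (-(p * s)) * MM n p s := by
  simp_rw [kap_scale p s r hr]
  rw [integral_const_mul, Measure.integral_comp_smul, finrank_euclideanSpace_fin, smul_eq_mul, MM]
  rw [inv_pow, inv_inv, abs_of_pos (by positivity), ← mul_assoc, ← Real.rpow_natCast, ← Real.rpow_add hr]
  congr 2; ring

lemma kap_neg (p s r : ℝ) (h : Rn n) : kap n p s r (-h) = kap n p s r h := by
  unfold kap; rw [norm_neg]

lemma ball_vol (x : Rn n) (r : ℝ) (hr : 0 < r) :
    volume.real (ball x r) = r ^ n * volume.real (ball (0 : Rn n) 1) := by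
  rw [measureReal_def, Measure.addHaar_ball_of_pos _ _ hr, ENNReal.toReal_mul,
    ENNReal.toReal_ofReal (by positivity), finrank_euclideanSpace_fin, measureReal_def]

lemma om_pos : 0 < volume.real (ball (0 : Rn n) 1) :=
  ENNReal.toReal_pos (measure_ball_pos _ _ one_pos).ne' measure_ball_lt_top.ne

lemma G_int (x₀ : Rn n) (ρ : ℝ) : Integrable ((ball x₀ ρ).indicator (1 : Rn n → ℝ)) := by
  rw [integrable_indicator_iff measurableSet_ball]
  exact integrableOn_const measure_ball_lt_top.ne

lemma G_integral (x₀ : Rn n) (ρ : ℝ) : ∫ x, (ball x₀ ρ).indicator (1 : Rn n → ℝ) x = volume.real (ball x₀ ρ) := by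
  exact integral_indicator_one measurableSet_ball

lemma gk_int (hn : 1 ≤ n) (p s r : ℝ) (hp : 1 < p) (hs : 0 < s) (hs1 : s < 1) (hr : 0 < r)
    (x₀ : Rn n) (ρ : ℝ) :
    Integrable (fun z : Rn n × Rn n => (ball x₀ ρ).indicator (1 : Rn n → ℝ) z.2 * kap n p s r (z.1 - z.2)) ∧
    ∫ z : Rn n × Rn n, (ball x₀ ρ).indicator (1 : Rn n → ℝ) z.2 * kap n p s r (z.1 - z.2) =
      volume.real (ball x₀ ρ) * (r ^ (-(p * s)) * MM n p s) := by
  have h := (G_int x₀ ρ).convolution_integrand (ContinuousLinearMap.mul ℝ ℝ)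
    (kap_int hn p s r hp hs hs1 hr) (ν := volume) (μ := volume)
  simp only [ContinuousLinearMap.mul_apply'] at h
  refine ⟨h, ?_⟩
  rw [Measure.volume_eq_prod, integral_prod_symm _ h]
  simp only
  simp_rw [integral_const_mul, integral_sub_right_eq_self (fun x => kap n p s r x)]
  rw [integral_mul_const, kap_integral p s r hr, G_integral]

lemma gk_int' (hn : 1 ≤ n) (p s r : ℝ) (hp : 1 < p) (hs : 0 < s) (hs1 : s < 1) (hr : 0 < r)
    (x₀ : Rn n) (ρ : ℝ) :
    Integrable (fun z : Rn n × Rn n => (ball x₀ ρ).indicator (1 : Rn n → ℝ) z.1 * kap n p s r (z.1 - z.2)) ∧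
    ∫ z : Rn n × Rn n, (ball x₀ ρ).indicator (1 : Rn n → ℝ) z.1 * kap n p s r (z.1 - z.2) =
      volume.real (ball x₀ ρ) * (r ^ (-(p * s)) * MM n p s) := by
  obtain ⟨h1, h2⟩ := gk_int hn p s r hp hs hs1 hr x₀ ρ
  have e : (fun z : Rn n × Rn n => (ball x₀ ρ).indicator (1 : Rn n → ℝ) z.1 * kap n p s r (z.1 - z.2)) =
    (fun z : Rn n × Rn n => (ball x₀ ρ).indicator (1 : Rn n → ℝ) z.2 * kap n p s r (z.1 - z.2)) ∘ Prod.swap := by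
    funext z; simp only [Function.comp, Prod.fst_swap, Prod.snd_swap]; rw [← kap_neg, neg_sub]
  rw [e]
  rw [Measure.volume_eq_prod] at h1 h2 ⊢
  refine ⟨h1.swap, ?_⟩
  rw [← h2]
  exact integral_prod_swap (μ := (volume : Measure (Rn n))) (ν := (volume : Measure (Rn n)))
    (fun z : Rn n × Rn n => (ball x₀ ρ).indicator (1 : Rn n → ℝ) z.2 * kap n p s r (z.1 - z.2))

lemma eta_gag_le (p s r : ℝ) (hp : 1 < p) (hr : 0 < r) (x₀ : Rn n) (z : Rn n × Rn n) :
    gagliardoIntegrand n p s (eta x₀ r) z ≤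
      (ball x₀ (3 / 2 * r)).indicator (1 : Rn n → ℝ) z.2 * kap n p s r (z.1 - z.2) +
      (ball x₀ (3 / 2 * r)).indicator (1 : Rn n → ℝ) z.1 * kap n p s r (z.1 - z.2) := by
  have hk := kap_nonneg p s r hr (z.1 - z.2)
  have hle : gagliardoIntegrand n p s (eta x₀ r) z ≤ kap n p s r (z.1 - z.2) := by
    unfold gagliardoIntegrand kap
    gcongr
    exact le_min (eta_sub_le_one _ _ _ _) (eta_lip _ _ hr _ _)
  by_cases h1 : z.1 ∈ ball x₀ (3 / 2 * r) <;> by_cases h2 : z.2 ∈ ball x₀ (3 / 2 * r)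
  · rw [indicator_of_mem h1, indicator_of_mem h2]; simp only [Pi.one_apply]; linarith
  · rw [indicator_of_mem h1, indicator_of_notMem h2]; simp only [Pi.one_apply]; linarith
  · rw [indicator_of_notMem h1, indicator_of_mem h2]; simp only [Pi.one_apply]; linarith
  · rw [indicator_of_notMem h1, indicator_of_notMem h2]
    unfold gagliardoIntegrand
    rw [eta_eq_zero hr h1, eta_eq_zero hr h2]
    simp [Real.zero_rpow (by linarith : p ≠ 0)]

lemma gag_meas (p s : ℝ) (u : Rn n → ℝ) (hu : Measurable u) : Measurable (gagliardoIntegrand n p s u) := by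
  unfold gagliardoIntegrand; fun_prop

lemma gag_nonneg (p s : ℝ) (u : Rn n → ℝ) (z) : 0 ≤ gagliardoIntegrand n p s u z := by
  unfold gagliardoIntegrand; positivity

lemma eta_gag_int (hn : 1 ≤ n) (p s r : ℝ) (hp : 1 < p) (hs : 0 < s) (hs1 : s < 1) (hr : 0 < r)
    (x₀ : Rn n) : Integrable (gagliardoIntegrand n p s (eta x₀ r)) ∧
    ∫ z, gagliardoIntegrand n p s (eta x₀ r) z ≤
      2 * (volume.real (ball x₀ (3 / 2 * r)) * (r ^ (-(p * s)) * MM n p s)) := by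
  obtain ⟨h1, h2⟩ := gk_int hn p s r hp hs hs1 hr x₀ (3 / 2 * r)
  obtain ⟨h1', h2'⟩ := gk_int' hn p s r hp hs hs1 hr x₀ (3 / 2 * r)
  have hi : Integrable (gagliardoIntegrand n p s (eta x₀ r)) := by
    refine Integrable.mono' (h1.add h1') (gag_meas p s _ (eta_meas x₀ r)).aestronglyMeasurable ?_
    refine Eventually.of_forall fun z => ?_
    rw [Real.norm_of_nonneg (gag_nonneg _ _ _ _)]
    exact eta_gag_le p s r hp hr x₀ z
  refine ⟨hi, ?_⟩
  calc _ ≤ _ := integral_mono hi (h1.add h1') (eta_gag_le p s r hp hr x₀)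
    _ = _ := by
      rw [integral_add' h1 h1', h2, h2']; ring
end kap


section D
variable {n : ℕ}

lemma add_rpow_le' (p a b : ℝ) (hp : 0 < p) (ha : 0 ≤ a) (hb : 0 ≤ b) :
    (a + b) ^ p ≤ 2 ^ p * (a ^ p + b ^ p) := by
  rcases le_total a b with h | h
  · have : (a + b) ^ p ≤ (2 * b) ^ p := Real.rpow_le_rpow (by positivity) (by linarith) hp.le
    rw [Real.mul_rpow (by norm_num) hb] at this
    have : 0 ≤ (2:ℝ) ^ p * a ^ p := by positivity
    linarith
  · have : (a + b) ^ p ≤ (2 * a) ^ p := Real.rpow_le_rpow (by positivity) (by linarith) hp.le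
    rw [Real.mul_rpow (by norm_num) ha] at this
    have : 0 ≤ (2:ℝ) ^ p * b ^ p := by positivity
    linarith

lemma locInt_plus (q : ℝ) (hq : 1 < q) (V : Rn n → ℝ) (hV : Measurable V)
    (h : LocallyIntegrable (fun x => plusPart V x ^ q) volume) :
    LocallyIntegrable (plusPart V) volume := by
  have h1 : LocallyIntegrable (fun x : Rn n => (1:ℝ) + plusPart V x ^ q) volume :=
    (locallyIntegrable_const 1).add h
  refine h1.mono ?_ ?_
  · unfold plusPart; exact (hV.max measurable_const).aestronglyMeasurable
  · refine Eventually.of_forall fun x => ?_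
    have h0 : 0 ≤ plusPart V x := le_max_right _ _
    rw [Real.norm_of_nonneg h0, Real.norm_of_nonneg (by positivity)]
    rcases le_total (plusPart V x) 1 with h | h
    · have : 0 ≤ plusPart V x ^ q := by positivity
      linarith
    · have := Real.rpow_le_rpow_of_exponent_le h hq.le
      rw [Real.rpow_one] at this; linarith

lemma intOn_bdd {f : Rn n → ℝ} (hf : LocallyIntegrable f volume) {Ω : Set (Rn n)}
    (hΩ : Bornology.IsBounded Ω) : IntegrableOn f Ω :=
  (hf.integrableOn_isCompact hΩ.isCompact_closure).mono_set subset_closure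

lemma phi_memX (hn : 1 ≤ n) (p s b r : ℝ) (hp : 1 < p) (hs : 0 < s) (hs1 : s < 1) (hb : 0 < b)
    (hr : 0 < r) (Ω : Set (Rn n)) (hΩb : Bornology.IsBounded Ω)
    (u : Rn n → ℝ) (hu : MemX n p s Ω u) (x₀ : Rn n) : MemX n p s Ω (phi p b u x₀ r) := by
  obtain ⟨hum, -, hug⟩ := hu
  have hpm := phi_meas p b u hum x₀ r
  refine ⟨hpm, ?_, ?_⟩
  · have : IntegrableOn (fun _ : Rn n => (b ^ (1 - p)) ^ p) Ω :=
      integrableOn_const hΩb.measure_lt_top.ne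
    refine Integrable.mono' this
      (by fun_prop : Measurable fun x => |phi p b u x₀ r x| ^ p).aestronglyMeasurable ?_
    refine Eventually.of_forall fun x => ?_
    have h0 := phi_nonneg p b hb u x₀ r x
    rw [abs_of_nonneg h0, Real.norm_of_nonneg (by positivity)]
    exact Real.rpow_le_rpow h0 (phi_le p b hp hb u x₀ r x) (by linarith)
  · have h1 := (eta_gag_int hn p s r hp hs hs1 hr x₀).1.integrableOn (s := R2n n Ω)
    have h2 := ((hug.const_mul (((p - 1) * b ^ (-p)) ^ p)).add
      (h1.const_mul ((p * b ^ (1 - p)) ^ p))).const_mul (2 ^ p)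
    refine Integrable.mono' h2 (gag_meas p s _ hpm).aestronglyMeasurable ?_
    refine Eventually.of_forall fun z => ?_
    rw [Real.norm_of_nonneg (gag_nonneg _ _ _ _)]
    simp only [Pi.add_apply]
    have hp1 : 0 < p - 1 := by linarith
    unfold gagliardoIntegrand
    have h3 := Real.rpow_le_rpow (abs_nonneg _) (phi_sub p b hp hb u x₀ r z.1 z.2) (by linarith : 0 ≤ p)
    have h4 := h3.trans (add_rpow_le' p _ _ (by linarith) (by positivity) (by positivity))
    rw [Real.mul_rpow (x := (p - 1) * b ^ (-p)) (by positivity) (by positivity),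
      Real.mul_rpow (x := p * b ^ (1 - p)) (by positivity) (by positivity)] at h4
    have hw : 0 ≤ ‖z.1 - z.2‖ ^ (-(n : ℝ) - p * s) := by positivity
    calc _ ≤ _ := mul_le_mul_of_nonneg_right h4 hw
      _ = _ := by ring

lemma phi_memY0 (hn : 1 ≤ n) (p s q b r R : ℝ) (hp : 1 < p) (hs : 0 < s) (hs1 : s < 1) (hq : 1 < q) (hb : 0 < b)
    (hr : 0 < r) (hrR : r < R / 2) (Ω : Set (Rn n)) (hΩb : Bornology.IsBounded Ω)
    (V : Rn n → ℝ) (hV : IsPotential n p s q V)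
    (u : Rn n → ℝ) (hu : MemX n p s Ω u) (x₀ : Rn n) (hB : ball x₀ R ⊆ Ω) :
    MemY0 n p s Ω V (phi p b u x₀ r) := by
  have hX := phi_memX hn p s b r hp hs hs1 hb hr Ω hΩb u hu x₀
  have hVm := hV.measurable
  have hpm := hX.1
  have key : ∀ W : Rn n → ℝ, Measurable W → (∀ x, 0 ≤ W x) → IntegrableOn W Ω →
      IntegrableOn (fun x => |phi p b u x₀ r x| ^ p * W x) Ω := by
    intro W hW hW0 hWi
    refine Integrable.mono' (hWi.const_mul ((b ^ (1 - p)) ^ p)) (by fun_prop) ?_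
    refine Eventually.of_forall fun x => ?_
    have h0 := phi_nonneg p b hb u x₀ r x
    have := hW0 x
    rw [abs_of_nonneg h0, Real.norm_of_nonneg (by positivity)]
    apply mul_le_mul_of_nonneg_right _ this
    exact Real.rpow_le_rpow h0 (phi_le p b hp hb u x₀ r x) (by linarith)
  refine ⟨⟨hX, ?_⟩, ?_, ?_⟩
  · refine Eventually.of_forall fun x hx => phi_eq_zero hp hr fun h => hx (hB ?_)
    exact ball_subset_ball (by linarith) h
  · apply key
    · unfold plusPart; fun_prop
    · exact fun x => le_max_right _ _
    · exact intOn_bdd (locInt_plus q hq V hVm hV.plusPart_locLq) hΩb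
  · apply key
    · unfold minusPart; fun_prop
    · exact fun x => le_max_right _ _
    · exact intOn_bdd hV.minusPart_locInt hΩb

lemma young_simple (p a b : ℝ) (hp : 1 < p) (ha : 0 ≤ a) (hb : 0 ≤ b) :
    a ^ (p - 1) * b ≤ a ^ p + b ^ p := by
  have e : ∀ t : ℝ, 0 ≤ t → t ^ p = t ^ (p - 1) * t := by
    intro t ht
    rcases ht.eq_or_lt with h | h
    · rw [← h, Real.zero_rpow (by linarith)]; simp
    · rw [← Real.rpow_add_one h.ne']; ring_nf
  have hap : 0 ≤ a ^ p := by positivity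
  have hbp : 0 ≤ b ^ p := by positivity
  rcases le_total a b with h | h
  · have : a ^ (p - 1) * b ≤ b ^ (p - 1) * b :=
      mul_le_mul_of_nonneg_right (Real.rpow_le_rpow ha h (by linarith)) hb
    rw [← e b hb] at this; linarith
  · have : a ^ (p - 1) * b ≤ a ^ (p - 1) * a := mul_le_mul_of_nonneg_left h (by positivity)
    rw [← e a ha] at this; linarith

lemma pairing_int (p s lam Lam : ℝ) (hp : 1 < p)  (Ω : Set (Rn n))
    (hlam : 0 < lam)
    (K : Rn n → ℝ) (hK : KernelClass n p s lam Lam K) (hc : 0 < cnps n p s)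
    (u φ : Rn n → ℝ) (hu : MemX n p s Ω u) (hφ : MemX n p s Ω φ) (h0 : ∀ x ∉ Ω, φ x = 0) :
    Integrable (fun z : Rn n × Rn n => Hp p (u z.1 - u z.2) * (φ z.1 - φ z.2) * K (z.1 - z.2)) := by
  obtain ⟨hum, -, hug⟩ := hu
  obtain ⟨hpm, -, hpg⟩ := hφ
  obtain ⟨hKm, -, hKb⟩ := hK
  have hsupp : Function.support (fun z : Rn n × Rn n => Hp p (u z.1 - u z.2) * (φ z.1 - φ z.2) * K (z.1 - z.2))
      ⊆ R2n n Ω := by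
    intro z hz
    by_contra hcon
    simp only [R2n, mem_ofPred_eq, not_or] at hcon
    apply hz
    simp only [h0 _ hcon.1, h0 _ hcon.2, sub_self, mul_zero, zero_mul]
  rw [← integrableOn_iff_integrable_of_support_subset hsupp]
  have hi := (hug.add hpg).const_mul (cnps n p s * Lam)
  refine Integrable.mono' hi ?_ ?_
  · unfold Hp; fun_prop
  · refine Eventually.of_forall fun z => ?_
    simp only [Pi.add_apply]
    by_cases hz : z.1 = z.2
    · simp only [hz, sub_self, mul_zero, zero_mul, norm_zero]
      unfold gagliardoIntegrand
      simp [hz, Real.zero_rpow (by linarith : p ≠ 0)]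
    obtain ⟨hK1, hK2⟩ := hKb (z.1 - z.2) (sub_ne_zero.2 hz)
    have hw : 0 ≤ ‖z.1 - z.2‖ ^ (-(n : ℝ) - p * s) := by positivity
    have hK0 : 0 ≤ K (z.1 - z.2) := le_trans (by positivity) hK1
    rw [norm_mul, norm_mul, Real.norm_eq_abs, Real.norm_eq_abs, Hp_abs p _ hp, Real.norm_of_nonneg hK0]
    have h1 := young_simple p |u z.1 - u z.2| |φ z.1 - φ z.2| hp (abs_nonneg _) (abs_nonneg _)
    unfold gagliardoIntegrand
    calc _ ≤ (|u z.1 - u z.2| ^ p + |φ z.1 - φ z.2| ^ p) * (cnps n p s * Lam * ‖z.1 - z.2‖ ^ (-(n : ℝ) - p * s)) :=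
          mul_le_mul h1 hK2 hK0 (by positivity)
      _ = _ := by ring

lemma weight_int (hn : 1 ≤ n) (p s R : ℝ) (hp : 1 < p) (hs : 0 < s) (hs1 : s < 1) (hR : 0 < R) (x₀ : Rn n) :
    IntegrableOn (fun y => ‖y - x₀‖ ^ (-(n : ℝ) - p * s)) (ball x₀ R)ᶜ := by
  have h := ((kap_int hn p s (2 * R) hp hs hs1 (by positivity)).comp_sub_right x₀).integrableOn (s := (ball x₀ R)ᶜ)
  refine h.congr ?_
  filter_upwards [ae_restrict_mem measurableSet_ball.compl] with y hy
  rw [mem_compl_iff, mem_ball_iff_norm, not_lt] at hy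
  unfold kap
  rw [min_eq_left, Real.one_rpow, one_mul]
  rw [div_mul_eq_mul_div, le_div_iff₀ (by positivity)]; linarith

lemma tail_int (hn : 1 ≤ n) (p s R : ℝ) (hp : 1 < p) (hs : 0 < s) (hs1 : s < 1) (hR : 0 < R) (x₀ : Rn n)
    (Ω : Set (Rn n)) (hB : ball x₀ R ⊆ Ω) (u : Rn n → ℝ) (hu : MemX n p s Ω u) :
    IntegrableOn (fun y => |minusPart u y| ^ (p - 1) * ‖y - x₀‖ ^ (-(n : ℝ) - p * s)) (ball x₀ R)ᶜ := by
  obtain ⟨hum, -, hug⟩ := hu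
  have hmm : Measurable (minusPart u) := by unfold minusPart; fun_prop
  have h1 : IntegrableOn (gagliardoIntegrand n p s u) (ball x₀ (R / 2) ×ˢ univ) :=
    hug.mono_set (by
      rintro z ⟨hz, -⟩
      exact Or.inl (hB (ball_subset_ball (by linarith) hz)))
  unfold IntegrableOn at h1
  rw [Measure.volume_eq_prod, ← Measure.prod_restrict, Measure.restrict_univ] at h1
  have h2 := h1.prod_right_ae
  have hne : (volume.restrict (ball x₀ (R / 2)) : Measure (Rn n)) ≠ 0 := by
    intro h
    rw [Measure.restrict_eq_zero] at h
    exact (measure_ball_pos volume x₀ (by positivity : 0 < R / 2)).ne' h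
  have : NeBot (ae (volume.restrict (ball x₀ (R / 2)) : Measure (Rn n))) := ae_neBot.2 hne
  obtain ⟨x, hx, hxB⟩ := (h2.and (ae_restrict_mem measurableSet_ball)).exists
  have hw := weight_int hn p s R hp hs hs1 hR x₀
  have hi : IntegrableOn (fun y => (1 + 2 ^ p * |u x| ^ p) * ‖y - x₀‖ ^ (-(n : ℝ) - p * s) +
      2 ^ p * 2 ^ ((n:ℝ) + p * s) * gagliardoIntegrand n p s u (x, y)) (ball x₀ R)ᶜ :=
    (hw.const_mul _).add ((hx.integrableOn).const_mul _)
  refine Integrable.mono' hi (by fun_prop) ?_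
  filter_upwards [ae_restrict_mem measurableSet_ball.compl] with y hy
  rw [mem_compl_iff, mem_ball_iff_norm, not_lt] at hy
  rw [mem_ball_iff_norm] at hxB
  rw [Real.norm_of_nonneg (by positivity)]
  have hy0 : 0 < ‖y - x₀‖ := by linarith
  have hle : |minusPart u y| ≤ |u y| := by
    unfold minusPart
    rw [abs_of_nonneg (le_max_right _ _)]
    exact max_le (neg_le_abs _) (abs_nonneg _)
  have e1 : |minusPart u y| ^ (p - 1) ≤ 1 + |u y| ^ p := by
    calc |minusPart u y| ^ (p - 1) ≤ |u y| ^ (p - 1) := Real.rpow_le_rpow (abs_nonneg _) hle (by linarith)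
      _ ≤ _ := by
        have h := young_simple p |u y| 1 hp (abs_nonneg _) zero_le_one
        rw [Real.one_rpow] at h; linarith
  have e2 : |u y| ^ p ≤ 2 ^ p * (|u x - u y| ^ p + |u x| ^ p) := by
    refine le_trans (Real.rpow_le_rpow (abs_nonneg _) ?_ (by linarith)) (add_rpow_le' p _ _ (by linarith) (abs_nonneg _) (abs_nonneg _))
    have := abs_sub_abs_le_abs_sub (u y) (u x)
    rw [abs_sub_comm] at this; linarith
  have e3 : ‖y - x₀‖ ^ (-(n : ℝ) - p * s) ≤ 2 ^ ((n:ℝ) + p * s) * ‖x - y‖ ^ (-(n : ℝ) - p * s) := by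
    have hd : ‖x - y‖ ≤ 2 * ‖y - x₀‖ := by
      have := norm_sub_le (x - x₀) (y - x₀)
      rw [sub_sub_sub_cancel_right] at this
      linarith
    have hxy : 0 < ‖x - y‖ := by
      have := norm_sub_norm_le (y - x₀) (x - x₀)
      rw [sub_sub_sub_cancel_right, norm_sub_rev y x] at this
      linarith
    have hexp : -(n : ℝ) - p * s ≤ 0 := by
      have : 0 < p * s := by positivity
      have : (0:ℝ) ≤ n := by positivity
      linarith
    have h3 := Real.rpow_le_rpow_of_nonpos hxy hd hexp
    rw [Real.mul_rpow (by norm_num) hy0.le, show -(n:ℝ) - p * s = -((n:ℝ) + p * s) by ring,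
            Real.rpow_neg (by norm_num : (0:ℝ) ≤ 2)] at h3
    rw [show -(n:ℝ) - p * s = -((n:ℝ) + p * s) by ring]
    have hpos : (0:ℝ) < 2 ^ ((n:ℝ) + p * s) := by positivity
    calc _ = 2 ^ ((n:ℝ) + p * s) * ((2 ^ ((n:ℝ) + p * s))⁻¹ * ‖y - x₀‖ ^ (-((n:ℝ) + p * s))) := by
            field_simp
      _ ≤ _ := by gcongr
  have hw0 : 0 ≤ ‖y - x₀‖ ^ (-(n : ℝ) - p * s) := by positivity
  calc _ ≤ (1 + 2 ^ p * (|u x - u y| ^ p + |u x| ^ p)) * ‖y - x₀‖ ^ (-(n : ℝ) - p * s) := by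
        gcongr; linarith
    _ = (1 + 2 ^ p * |u x| ^ p) * ‖y - x₀‖ ^ (-(n : ℝ) - p * s) + 2 ^ p * |u x - u y| ^ p * ‖y - x₀‖ ^ (-(n : ℝ) - p * s) := by ring
    _ ≤ (1 + 2 ^ p * |u x| ^ p) * ‖y - x₀‖ ^ (-(n : ℝ) - p * s) + 2 ^ p * |u x - u y| ^ p * (2 ^ ((n:ℝ) + p * s) * ‖x - y‖ ^ (-(n : ℝ) - p * s)) := by gcongr
    _ = _ := by unfold gagliardoIntegrand; ring

end D


section E
variable {n : ℕ}

lemma lq_nonneg (q : ℝ) (Ω : Set (Rn n)) (f : Rn n → ℝ) : 0 ≤ lqNormOn n q Ω f := by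
  unfold lqNormOn
  exact Real.rpow_nonneg (integral_nonneg fun x => by positivity) _

lemma holder_ball (q : ℝ) (hq : 1 < q) (Ω B : Set (Rn n)) (hBm : MeasurableSet B) (hB : B ⊆ Ω)
    (hBf : volume B ≠ ⊤)
    (f : Rn n → ℝ) (hf : Measurable f) (hf0 : ∀ x, 0 ≤ f x) (hi : IntegrableOn (fun x => f x ^ q) Ω) :
    ∫ x in B, f x ≤ lqNormOn n q Ω f * volume.real B ^ (1 - 1 / q) := by
  have hpq : q.HolderConjugate (Real.conjExponent q) := Real.HolderConjugate.conjExponent hq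
  have hq0 : 0 < q := by linarith
  have hfin : IsFiniteMeasure (volume.restrict B) := ⟨by rw [Measure.restrict_apply_univ]; exact hBf.lt_top⟩
  have hL : MemLp f (ENNReal.ofReal q) (volume.restrict B) := by
    rw [← integrable_norm_rpow_iff hf.aestronglyMeasurable (by simpa using hq0) ENNReal.ofReal_ne_top,
      ENNReal.toReal_ofReal hq0.le]
    refine (hi.mono_set hB).congr (Eventually.of_forall fun x => ?_)
    simp only [Real.norm_of_nonneg (hf0 x)]
  have h := integral_mul_le_Lp_mul_Lq_of_nonneg (μ := volume.restrict B) (f := f) (g := fun _ => (1:ℝ)) hpq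
    (Eventually.of_forall hf0) (Eventually.of_forall fun _ => zero_le_one) hL (memLp_const 1)
  simp only [mul_one, Real.one_rpow] at h
  rw [integral_const, smul_eq_mul, mul_one, measureReal_restrict_apply_univ] at h
  have hexp : 1 / Real.conjExponent q = 1 - 1 / q := by
    have := hpq.inv_add_inv_eq_one
    rw [one_div, one_div]; linarith
  rw [hexp] at h
  refine h.trans (mul_le_mul_of_nonneg_right ?_ (by positivity))
  unfold lqNormOn
  apply Real.rpow_le_rpow (integral_nonneg fun x => Real.rpow_nonneg (hf0 x) _) _ (by positivity)
  have e : (fun x => |f x| ^ q) = fun x => f x ^ q := by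
    funext x; rw [abs_of_nonneg (hf0 x)]
  rw [e]
  exact setIntegral_mono_set hi (Eventually.of_forall fun x => Real.rpow_nonneg (hf0 x) _)
    hB.eventuallyLE

lemma Vterm (p s q b r R : ℝ) (hp : 1 < p) (hq : 1 < q) (hb : 0 < b)
    (hr : 0 < r) (hrR : r < R / 2) (Ω : Set (Rn n)) (hΩb : Bornology.IsBounded Ω)
    (V : Rn n → ℝ) (hV : IsPotential n p s q V)
    (u : Rn n → ℝ) (x₀ : Rn n) (hB : ball x₀ R ⊆ Ω) (hu : ∀ x ∈ ball x₀ R, 0 ≤ u x) :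
    ∫ x, V x * (|u x| ^ (p - 2) * u x) * phi p b u x₀ r x ≤
      lqNormOn n q Ω (plusPart V) * volume.real (ball x₀ (3 / 2 * r)) ^ (1 - 1 / q) := by
  have hsub : ball x₀ (3 / 2 * r) ⊆ ball x₀ R := ball_subset_ball (by linarith)
  have hV0 : ∀ x, 0 ≤ plusPart V x := fun x => le_max_right _ _
  have hVm : Measurable (plusPart V) := by have := hV.measurable; unfold plusPart; fun_prop
  have h1 := holder_ball q hq Ω (ball x₀ (3 / 2 * r)) measurableSet_ball (hsub.trans hB)
    measure_ball_lt_top.ne (plusPart V) hVm hV0 (intOn_bdd hV.plusPart_locLq hΩb)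
  refine le_trans ?_ h1
  by_cases hint : Integrable fun x => V x * (|u x| ^ (p - 2) * u x) * phi p b u x₀ r x
  swap
  · rw [integral_undef hint]; exact integral_nonneg hV0
  rw [← integral_indicator measurableSet_ball]
  have hVi : IntegrableOn (plusPart V) (ball x₀ (3 / 2 * r)) :=
    (intOn_bdd (locInt_plus q hq V hV.measurable hV.plusPart_locLq) hΩb).mono_set (hsub.trans hB)
  refine integral_mono hint (hVi.integrable_indicator measurableSet_ball) fun x => ?_
  by_cases hx : x ∈ ball x₀ (3 / 2 * r)
  · rw [indicator_of_mem hx]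
    have hux := hu x (hsub hx)
    have e : |u x| ^ (p - 2) * u x = u x ^ (p - 1) := Hp_nonneg_eq p (u x) hp hux
    simp only
    rw [e]
    have h0 := phi_nonneg p b hb u x₀ r x
    have hle : u x ^ (p - 1) * phi p b u x₀ r x ≤ 1 := by
      unfold phi
      rw [abs_of_nonneg hux]
      have h4 : eta x₀ r x ^ p ≤ 1 := Real.rpow_le_one (eta_nonneg _ _ _) (eta_le_one _ _ _) (by linarith)
      have h5 : u x ^ (p - 1) ≤ (u x + b) ^ (p - 1) := Real.rpow_le_rpow hux (by linarith) (by linarith)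
      have h6 : (u x + b) ^ (p - 1) * (u x + b) ^ (1 - p) = 1 := by
        rw [← Real.rpow_add (by linarith)]; simp
      have h7 := eta_nonneg x₀ r x
      calc _ ≤ (u x + b) ^ (p - 1) * (1 * (u x + b) ^ (1 - p)) := by gcongr
        _ = 1 := by rw [one_mul, h6]
    have hge : 0 ≤ u x ^ (p - 1) * phi p b u x₀ r x := by positivity
    have hVle : V x ≤ plusPart V x := le_max_left _ _
    calc V x * u x ^ (p - 1) * phi p b u x₀ r x = V x * (u x ^ (p - 1) * phi p b u x₀ r x) := by ring
      _ ≤ plusPart V x * (u x ^ (p - 1) * phi p b u x₀ r x) := mul_le_mul_of_nonneg_right hVle hge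
      _ ≤ plusPart V x * 1 := mul_le_mul_of_nonneg_left hle (hV0 x)
      _ = _ := mul_one _
  · rw [indicator_of_notMem hx]; simp only
    rw [phi_eq_zero hp hr hx, mul_zero]

lemma poincare (p s r d : ℝ) (hp : 1 < p) (hs : 0 < s) (hr : 0 < r) (x₀ : Rn n)
    (v : Rn n → ℝ) (hv : Measurable v) (hv0 : ∀ x, 0 ≤ v x) (hvd : ∀ x, v x ≤ d)
    (hi : IntegrableOn (gagliardoIntegrand n p s v) (ball x₀ r ×ˢ ball x₀ r)) :
    (⨍ x in ball x₀ r, |v x - (⨍ y in ball x₀ r, v y)| ^ p) ≤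
      (volume.real (ball x₀ r))⁻¹ * ((volume.real (ball x₀ r))⁻¹ * ((2 * r) ^ ((n:ℝ) + p * s) *
        ∫ z in ball x₀ r ×ˢ ball x₀ r, gagliardoIntegrand n p s v z)) := by
  set B := ball x₀ r with hBdef
  have hB0 : volume B ≠ 0 := (measure_ball_pos volume x₀ hr).ne'
  have hBt : volume B ≠ ⊤ := measure_ball_lt_top.ne
  have hm : 0 < volume.real B := ENNReal.toReal_pos hB0 hBt
  have hfin : IsFiniteMeasure (volume.restrict B) := ⟨by rw [Measure.restrict_apply_univ]; exact hBt.lt_top⟩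
  have hd0 : 0 ≤ d := (hv0 x₀).trans (hvd x₀)
  have habs : ∀ x y, |v x - v y| ≤ d := fun x y => by
    rw [abs_le]; constructor <;> linarith [hv0 x, hvd x, hv0 y, hvd y]
  have hbi : ∀ {f : Rn n → ℝ} (M : ℝ), Measurable f → (∀ x, |f x| ≤ M) → IntegrableOn f B := by
    intro f M hf hM
    exact Integrable.of_bound hf.aestronglyMeasurable M (Eventually.of_forall hM)
  have hvi : IntegrableOn v B := hbi d hv fun x => by rw [abs_of_nonneg (hv0 x)]; exact hvd x
  have habsp : ∀ x y, |v x - v y| ^ p ≤ d ^ p := fun x y =>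
    Real.rpow_le_rpow (abs_nonneg _) (habs x y) (by linarith)
  -- Jensen
  have jens : ∀ x, |v x - (⨍ y in B, v y)| ^ p ≤ (volume.real B)⁻¹ * ∫ y in B, |v x - v y| ^ p := by
    intro x
    have hi1 : IntegrableOn (fun y => |v x - v y|) B := hbi d (by fun_prop) fun y => by
      rw [abs_abs]; exact habs x y
    have hi2 : IntegrableOn (fun y => |v x - v y| ^ p) B := hbi (d ^ p) (by fun_prop) fun y => by
      rw [abs_of_nonneg (by positivity)]; exact habsp x y
    have h1 : |v x - (⨍ y in B, v y)| ≤ ⨍ y in B, |v x - v y| := by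
      have e : v x - (⨍ y in B, v y) = (volume.real B)⁻¹ * ∫ y in B, (v x - v y) := by
        rw [setAverage_eq, integral_sub (integrable_const _) hvi, smul_eq_mul, integral_const, smul_eq_mul,
          measureReal_restrict_apply_univ]
        field_simp
      rw [e, setAverage_eq, smul_eq_mul, abs_mul, abs_of_pos (by positivity)]
      exact mul_le_mul_of_nonneg_left (abs_integral_le_integral_abs) (by positivity)
    have h2 := (convexOn_rpow hp.le).map_set_average_le (μ := volume) (t := B) (f := fun y => |v x - v y|)
      (Real.continuous_rpow_const (by linarith)).continuousOn isClosed_Ici hB0 hBt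
      (Eventually.of_forall fun y => mem_Ici.2 (abs_nonneg (v x - v y))) hi1 hi2
    rw [setAverage_eq _ (fun y => |v x - v y| ^ p), smul_eq_mul] at h2
    exact (Real.rpow_le_rpow (abs_nonneg _) h1 (by linarith)).trans h2
  have hprod : IntegrableOn (fun z : Rn n × Rn n => |v z.1 - v z.2| ^ p) (B ×ˢ B) := by
    unfold IntegrableOn
    rw [Measure.volume_eq_prod, ← Measure.prod_restrict]
    refine Integrable.of_bound (Measurable.aestronglyMeasurable (by fun_prop)) (d ^ p) (Eventually.of_forall fun z => ?_)
    rw [Real.norm_of_nonneg (by positivity)]; exact habsp _ _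
  have hBm : MeasurableSet (B ×ˢ B) := measurableSet_ball.prod measurableSet_ball
  have step : ∫ z in B ×ˢ B, |v z.1 - v z.2| ^ p ≤ (2 * r) ^ ((n:ℝ) + p * s) *
        ∫ z in B ×ˢ B, gagliardoIntegrand n p s v z := by
    rw [← integral_const_mul]
    refine setIntegral_mono_on hprod (hi.const_mul _) hBm ?_
    rintro ⟨x, y⟩ ⟨hx, hy⟩
    simp only at hx hy ⊢
    unfold gagliardoIntegrand
    simp only
    by_cases hxy : x = y
    · subst hxy; simp [Real.zero_rpow (by linarith : p ≠ 0)]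
    have h0 : 0 < ‖x - y‖ := norm_pos_iff.2 (sub_ne_zero.2 hxy)
    have hle : ‖x - y‖ ≤ 2 * r := by
      rw [hBdef, mem_ball_iff_norm] at hx hy
      have := norm_sub_le (x - x₀) (y - x₀)
      rw [sub_sub_sub_cancel_right] at this
      linarith
    have hk : 1 ≤ (2 * r) ^ ((n:ℝ) + p * s) * ‖x - y‖ ^ (-(n : ℝ) - p * s) := by
      rw [show -(n:ℝ) - p * s = -((n:ℝ) + p * s) by ring, Real.rpow_neg h0.le, ← div_eq_mul_inv,
        one_le_div (by positivity)]
      exact Real.rpow_le_rpow h0.le hle (by positivity)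
    have ht : 0 ≤ |v x - v y| ^ p := by positivity
    calc |v x - v y| ^ p = |v x - v y| ^ p * 1 := (mul_one _).symm
      _ ≤ |v x - v y| ^ p * ((2 * r) ^ ((n:ℝ) + p * s) * ‖x - y‖ ^ (-(n : ℝ) - p * s)) :=
        mul_le_mul_of_nonneg_left hk ht
      _ = _ := by ring
  rw [setAverage_eq, smul_eq_mul]
  refine mul_le_mul_of_nonneg_left ?_ (by positivity)
  have hprod' : Integrable (fun z : Rn n × Rn n => |v z.1 - v z.2| ^ p) ((volume.restrict B).prod (volume.restrict B)) := by
    unfold IntegrableOn at hprod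
    rwa [Measure.volume_eq_prod, ← Measure.prod_restrict] at hprod
  calc ∫ x in B, |v x - (⨍ y in B, v y)| ^ p ≤ ∫ x in B, (volume.real B)⁻¹ * ∫ y in B, |v x - v y| ^ p := by
        refine integral_mono_of_nonneg (Eventually.of_forall fun x => by positivity) ?_ (Eventually.of_forall jens)
        exact hprod'.integral_prod_left.const_mul _
    _ = (volume.real B)⁻¹ * ∫ z in B ×ˢ B, |v z.1 - v z.2| ^ p := by
        rw [integral_const_mul, Measure.volume_eq_prod, ← Measure.prod_restrict, integral_prod _ hprod']
    _ ≤ _ := mul_le_mul_of_nonneg_left step (by positivity)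

lemma vb_gag_int (p s a b d r R : ℝ) (hp : 1 < p) (ha : 0 < a) (hb : 0 < b) (hrR : r < R / 2) (hr : 0 < r)
    (Ω : Set (Rn n)) (u : Rn n → ℝ) (hum : MemX n p s Ω u) (x₀ : Rn n) (hB : ball x₀ R ⊆ Ω)
    (hu : ∀ x ∈ ball x₀ R, 0 ≤ u x) (hvm : Measurable (vb a b d u)) :
    IntegrableOn (gagliardoIntegrand n p s (vb a b d u)) (ball x₀ r ×ˢ ball x₀ r) := by
  have hsub : ball x₀ r ⊆ ball x₀ R := ball_subset_ball (by linarith)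
  have h1 : IntegrableOn (gagliardoIntegrand n p s u) (ball x₀ r ×ˢ ball x₀ r) :=
    hum.2.2.mono_set (fun z hz => Or.inl (hB (hsub hz.1)))
  refine Integrable.mono' (h1.const_mul ((b⁻¹) ^ p)) (gag_meas p s _ hvm).aestronglyMeasurable ?_
  filter_upwards [ae_restrict_mem (measurableSet_ball.prod measurableSet_ball)] with z hz
  rw [Real.norm_of_nonneg (gag_nonneg _ _ _ _)]
  have hx := hu _ (hsub hz.1)
  have hy := hu _ (hsub hz.2)
  unfold gagliardoIntegrand
  have h2 := vb_sub a b d u ha hb z.1 z.2 hx hy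
  have h3 := log_lip b (u z.1 + b) (u z.2 + b) hb (by linarith) (by linarith)
  rw [add_sub_add_right_eq_sub] at h3
  have h4 := Real.rpow_le_rpow (abs_nonneg _) (h2.trans h3) (by linarith : 0 ≤ p)
  rw [Real.mul_rpow (by positivity) (abs_nonneg _)] at h4
  rw [← mul_assoc]
  gcongr

end E


section F
variable {n : ℕ}

lemma cnps_pos (p s : ℝ) (hp : 1 < p) (hs1 : s < 1) : 0 < cnps n p s := by
  unfold cnps
  have h1 : 0 < Real.Gamma (((n : ℝ) + p) / 2) := Real.Gamma_pos_of_pos (by positivity)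
  have h2 : 0 < Real.Gamma ((p + 1) / 2) := Real.Gamma_pos_of_pos (by positivity)
  have h3 : 0 < 1 - s := by linarith
  positivity

lemma vb_meas (a b d : ℝ) (u : Rn n → ℝ) (hu : Measurable u) : Measurable (vb a b d u) := by
  unfold vb; fun_prop

lemma energy (hn : 1 ≤ n) (p s lam Lam q a b d r R : ℝ) (hp : 1 < p) (hs : 0 < s) (hs1 : s < 1)
    (hlam : 0 < lam) (hLam : lam ≤ Lam) (hq : 1 < q) (ha : 0 < a) (hb : 0 < b)
    (hr : 0 < r) (hrR : r < R / 2) (Ω : Set (Rn n)) (hΩb : Bornology.IsBounded Ω)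
    (V : Rn n → ℝ) (hV : IsPotential n p s q V) (g K : Rn n → ℝ) (hK : KernelClass n p s lam Lam K)
    (u : Rn n → ℝ) (hsup : WeakSupersolution n p s Ω K V g u)
    (x₀ : Rn n) (hB : ball x₀ R ⊆ Ω) (hu : ∀ x ∈ ball x₀ R, 0 ≤ u x) :
    cnps n p s * lam * ((p - 1) / 2) *
      (∫ z in ball x₀ r ×ˢ ball x₀ r, gagliardoIntegrand n p s (vb a b d u) z) ≤
    cnps n p s * Lam * (C1 p + 2 ^ (p - 1)) *
        (2 * (volume.real (ball x₀ (3 / 2 * r)) * (r ^ (-(p * s)) * MM n p s))) +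
      cnps n p s * Lam * 2 ^ (p - 1) * b ^ (1 - p) * 4 ^ ((n:ℝ) + p * s) *
        (2 * (volume.real (ball x₀ (3 / 2 * r)) *
          ∫ y in (ball x₀ R)ᶜ, |minusPart u y| ^ (p - 1) * ‖y - x₀‖ ^ (-(n : ℝ) - p * s))) +
      lqNormOn n q Ω (plusPart V) * volume.real (ball x₀ (3 / 2 * r)) ^ (1 - 1 / q) := by
  have hc : 0 < cnps n p s := cnps_pos p s hp hs1
  have hR : 0 < R := by linarith
  have huX : MemX n p s Ω u := hsup.1.1.1
  have hY := phi_memY0 hn p s q b r R hp hs hs1 hq hb hr hrR Ω hΩb V hV u huX x₀ hB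
  have h0 := hsup.2 _ hY (phi_nonneg p b hb u x₀ r)
  have hVt := Vterm p s q b r R hp hq hb hr hrR Ω hΩb V hV u x₀ hB hu
  have hPi := pairing_int p s lam Lam hp Ω hlam K hK hc u _ huX hY.1.1
    (fun x hx => phi_eq_zero hp hr fun h => hx (hB (ball_subset_ball (by linarith) h)))
  have hE := eta_gag_int hn p s r hp hs hs1 hr x₀
  have hvi := vb_gag_int p s a b d r R hp ha hb hrR hr Ω u huX x₀ hB hu (vb_meas a b d u huX.1)
  have hT := tail_int hn p s R hp hs hs1 hR x₀ Ω hB u huX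
  have hHi := (integrable_indicator_iff measurableSet_ball.compl).2 hT
  have hvi' := (integrable_indicator_iff (measurableSet_ball.prod measurableSet_ball)).2 hvi
  have hHI := integral_indicator (μ := volume) (measurableSet_ball (x := x₀) (ε := R)).compl
    (f := fun y => |minusPart u y| ^ (p - 1) * ‖y - x₀‖ ^ (-(n : ℝ) - p * s))
  have hvI := integral_indicator (μ := volume) ((measurableSet_ball (x := x₀) (ε := r)).prod
    (measurableSet_ball (x := x₀) (ε := r))) (f := gagliardoIntegrand n p s (vb a b d u))
  have hGi := G_int x₀ (3 / 2 * r)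
  have hGI := G_integral x₀ (3 / 2 * r)
  have hpw := pw3 s lam Lam p a b d R r hp hs hs1 hlam hLam ha hb hr hrR K hK hc u x₀ hu
  set H := (ball x₀ R)ᶜ.indicator (fun y => |minusPart u y| ^ (p - 1) * ‖y - x₀‖ ^ (-(n : ℝ) - p * s)) with hH
  set G := (ball x₀ (3 / 2 * r)).indicator (1 : Rn n → ℝ) with hG
  set Q := (ball x₀ r ×ˢ ball x₀ r).indicator (gagliardoIntegrand n p s (vb a b d u)) with hQ
  have i1 : Integrable (fun z : Rn n × Rn n => G z.1 * H z.2) := hGi.mul_prod hHi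
  have i2 : Integrable (fun z : Rn n × Rn n => H z.1 * G z.2) := hHi.mul_prod hGi
  have e1 : ∫ z : Rn n × Rn n, G z.1 * H z.2 = (∫ x, G x) * ∫ y, H y := integral_prod_mul G H
  have e2 : ∫ z : Rn n × Rn n, H z.1 * G z.2 = (∫ x, H x) * ∫ y, G y := integral_prod_mul H G
  have hmono := integral_mono hPi (((hE.1.const_mul _).add ((i1.add i2).const_mul _)).sub (hvi'.const_mul _)) hpw
  have hsplit := integral_sub ((hE.1.const_mul (cnps n p s * Lam * (C1 p + 2 ^ (p - 1)))).add
    ((i1.add i2).const_mul (cnps n p s * Lam * 2 ^ (p - 1) * b ^ (1 - p) * 4 ^ ((n:ℝ) + p * s))))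
    (hvi'.const_mul (cnps n p s * lam * ((p - 1) / 2)))
  have hsplit2 := integral_add (hE.1.const_mul (cnps n p s * Lam * (C1 p + 2 ^ (p - 1))))
    ((i1.add i2).const_mul (cnps n p s * Lam * 2 ^ (p - 1) * b ^ (1 - p) * 4 ^ ((n:ℝ) + p * s)))
  have hsplit3 := integral_add i1 i2
  simp only [Pi.add_apply, Pi.sub_apply, integral_const_mul] at hmono hsplit hsplit2 hsplit3
  rw [hsplit, hsplit2, hsplit3, e1, e2, hHI, hGI, hvI] at hmono
  unfold pairing at h0
  have hA1 : 0 ≤ cnps n p s * Lam * (C1 p + 2 ^ (p - 1)) := by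
    have := C1_pos p hp
    have : 0 < Lam := by linarith
    positivity
  have := mul_le_mul_of_nonneg_left hE.2 hA1
  linarith

lemma sphere_pos (hn : 1 ≤ n) : 0 < sphereArea n := by
  unfold sphereArea
  have : 0 < (n:ℝ) := by exact_mod_cast hn
  exact mul_pos this om_pos

lemma tail_pow (hn : 1 ≤ n) (p s R : ℝ) (hp : 1 < p) (hs : 0 < s) (hR : 0 < R) (w : Rn n → ℝ) (x₀ : Rn n) :
    tail n p s w x₀ R ^ (p - 1) = p * s / sphereArea n * R ^ (p * s) *
      ∫ y in (Metric.ball x₀ R)ᶜ, |w y| ^ (p - 1) * ‖y - x₀‖ ^ (-(n : ℝ) - p * s) := by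
  unfold tail
  have := sphere_pos hn
  have hJ : 0 ≤ ∫ y in (Metric.ball x₀ R)ᶜ, |w y| ^ (p - 1) * ‖y - x₀‖ ^ (-(n : ℝ) - p * s) :=
    integral_nonneg fun y => by positivity
  rw [← Real.rpow_mul (by positivity), one_div, inv_mul_cancel₀ (by linarith), Real.rpow_one]

lemma rad_le (hn : 1 ≤ n) (x₀ : Rn n) (R ρ : ℝ) (hR : 0 < R) (hρ : 0 < ρ) (h : ball x₀ R ⊆ ball 0 ρ) : R ≤ ρ := by
  have h1 : volume.real (ball x₀ R) ≤ volume.real (ball (0 : Rn n) ρ) :=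
    measureReal_mono h measure_ball_lt_top.ne
  rw [ball_vol _ _ hR, ball_vol _ _ hρ] at h1
  have h2 := le_of_mul_le_mul_right h1 om_pos
  exact le_of_pow_le_pow_left₀ (by omega) hρ.le h2

lemma Wterm (p s q r ρ W1 : ℝ) (hp : 1 < p) (hs : 0 < s) (hq : (n:ℝ) / (p * s) < q) (hq1 : 1 < q)
    (hr : 0 < r) (hrρ : r ≤ ρ) (hW1 : 0 < W1) :
    (r ^ n)⁻¹ * r ^ (p * s) * (W1 * r ^ n) ^ (1 - 1 / q) ≤ max 1 W1 * (max 1 ρ) ^ (p * s) := by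
  have hps : 0 < p * s := by positivity
  have hq0 : 0 < q := by linarith
  have hq2 : 0 < 1 - 1 / q := by
    rw [sub_pos, div_lt_one hq0]; exact hq1
  have e : (r ^ n)⁻¹ * r ^ (p * s) * (W1 * r ^ n) ^ (1 - 1 / q) = W1 ^ (1 - 1 / q) * r ^ (p * s - n / q) := by
    rw [Real.mul_rpow hW1.le (by positivity), ← Real.rpow_natCast r n, ← Real.rpow_mul hr.le,
      ← Real.rpow_neg hr.le]
    have : p * s - (n:ℝ) / q = -(n:ℝ) + p * s + n * (1 - 1 / q) := by ring
    rw [this, Real.rpow_add hr, Real.rpow_add hr]; ring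
  rw [e]
  have hw : W1 ^ (1 - 1 / q) ≤ max 1 W1 := by
    calc W1 ^ (1 - 1 / q) ≤ (max 1 W1) ^ (1 - 1 / q) := Real.rpow_le_rpow hW1.le (le_max_right _ _) hq2.le
      _ ≤ (max 1 W1) ^ (1 : ℝ) := Real.rpow_le_rpow_of_exponent_le (le_max_left _ _) (by
          have : 0 < 1 / q := by positivity
          linarith)
      _ = _ := Real.rpow_one _
  have hnq : 0 ≤ (n:ℝ) / q := by positivity
  have hpos : 0 < p * s - n / q := by
    rw [div_lt_iff₀ hps] at hq
    rw [sub_pos, div_lt_iff₀ hq0]; linarith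
  have hr2 : r ^ (p * s - n / q) ≤ (max 1 ρ) ^ (p * s) := by
    calc r ^ (p * s - n / q) ≤ (max 1 ρ) ^ (p * s - n / q) :=
          Real.rpow_le_rpow hr.le (hrρ.trans (le_max_right _ _)) hpos.le
      _ ≤ _ := Real.rpow_le_rpow_of_exponent_le (le_max_left _ _) (by linarith)
  exact mul_le_mul hw hr2 (by positivity) (by positivity)

def W1c (n : ℕ) : ℝ := (3 / 2) ^ n * volume.real (ball (0 : Rn n) 1)

def c1c (n : ℕ) (p s Lam : ℝ) : ℝ := 2 * (cnps n p s * Lam * (C1 p + 2 ^ (p - 1))) * W1c n * MM n p s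

def c2c (n : ℕ) (p s Lam : ℝ) : ℝ :=
  2 * (cnps n p s * Lam * 2 ^ (p - 1) * 4 ^ ((n:ℝ) + p * s)) * W1c n * (sphereArea n / (p * s))

def c3c (n : ℕ) (p s ρ : ℝ) : ℝ := max 1 (W1c n) * (max 1 ρ) ^ (p * s)

def Fc (n : ℕ) (p s lam : ℝ) : ℝ :=
  ((volume.real (ball (0 : Rn n) 1)) ^ 2)⁻¹ * 2 ^ ((n:ℝ) + p * s) / (cnps n p s * lam * ((p - 1) / 2))

lemma final_bound (hn : 1 ≤ n) (p s lam Lam q a b d r R ρ : ℝ) (hp : 1 < p) (hs : 0 < s) (hs1 : s < 1)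
    (hlam : 0 < lam) (hLam : lam ≤ Lam) (hqn : (n:ℝ) / (p * s) < q) (hq : 1 < q) (ha : 0 < a) (hb : 0 < b)
    (hd : 0 < d)
    (hr : 0 < r) (hrR : r < R / 2) (hrρ : r ≤ ρ) (Ω : Set (Rn n)) (hΩb : Bornology.IsBounded Ω)
    (V : Rn n → ℝ) (hV : IsPotential n p s q V) (g K : Rn n → ℝ) (hK : KernelClass n p s lam Lam K)
    (u : Rn n → ℝ) (hsup : WeakSupersolution n p s Ω K V g u)
    (x₀ : Rn n) (hB : ball x₀ R ⊆ Ω) (hu : ∀ x ∈ ball x₀ R, 0 ≤ u x) :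
    (⨍ x in ball x₀ r, |vb a b d u x - (⨍ y in ball x₀ r, vb a b d u y)| ^ p) ≤
      Fc n p s lam * (c1c n p s Lam + c2c n p s Lam * (1 / b ^ (p - 1) * (r / R) ^ (p * s) *
        tail n p s (minusPart u) x₀ R ^ (p - 1)) + lqNormOn n q Ω (plusPart V) * c3c n p s ρ) := by
  have hc : 0 < cnps n p s := cnps_pos p s hp hs1
  have hR : 0 < R := by linarith
  have hps : 0 < p * s := by positivity
  have huX : MemX n p s Ω u := hsup.1.1.1
  have hvm := vb_meas a b d u huX.1
  have hvi := vb_gag_int p s a b d r R hp ha hb hrR hr Ω u huX x₀ hB hu hvm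
  have hP := poincare p s r d hp hs hr x₀ (vb a b d u) hvm
    (fun x => le_min (le_max_right _ _) hd.le) (fun x => min_le_right _ _) hvi
  have hE := energy hn p s lam Lam q a b d r R hp hs hs1 hlam hLam hq ha hb hr hrR Ω hΩb V hV g K hK u hsup x₀ hB hu
  have ht := tail_pow hn p s R hp hs hR (minusPart u) x₀
  have hN := lq_nonneg q Ω (plusPart V)
  have hom := om_pos (n := n)
  have hsp := sphere_pos hn
  have hW1 : 0 < W1c n := by unfold W1c; positivity
  have hW : volume.real (ball x₀ (3 / 2 * r)) = W1c n * r ^ n := by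
    rw [ball_vol _ _ (by positivity), mul_pow]; unfold W1c; ring
  have hWt := Wterm (n := n) p s q r ρ (W1c n) hp hs hqn hq hr hrρ hW1
  rw [ball_vol x₀ r hr] at hP
  rw [hW] at hE
  rw [ht]
  set J := ∫ y in (ball x₀ R)ᶜ, |minusPart u y| ^ (p - 1) * ‖y - x₀‖ ^ (-(n : ℝ) - p * s)
  set I := ∫ z in ball x₀ r ×ˢ ball x₀ r, gagliardoIntegrand n p s (vb a b d u) z
  set N := lqNormOn n q Ω (plusPart V)
  set om := volume.real (ball (0 : Rn n) 1)
  refine hP.trans ?_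
  have hA3 : 0 < cnps n p s * lam * ((p - 1) / 2) := by
    have : 0 < p - 1 := by linarith
    positivity
  have e2r : (2 * r) ^ ((n:ℝ) + p * s) = 2 ^ ((n:ℝ) + p * s) * (r ^ n * r ^ (p * s)) := by
    rw [Real.mul_rpow (by norm_num) hr.le, Real.rpow_add hr, Real.rpow_natCast]
  have hrn : 0 < r ^ n := by positivity
  have hrps : 0 < r ^ (p * s) := by positivity
  have hRps : 0 < R ^ (p * s) := by positivity
  have eL : (r ^ n * om)⁻¹ * ((r ^ n * om)⁻¹ * ((2 * r) ^ ((n:ℝ) + p * s) * I)) =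
      Fc n p s lam * ((r ^ n)⁻¹ * r ^ (p * s) * (cnps n p s * lam * ((p - 1) / 2) * I)) := by
    rw [e2r]; unfold Fc
    change _ = (om ^ 2)⁻¹ * 2 ^ ((n:ℝ) + p * s) / _ * _
    generalize cnps n p s * lam * ((p - 1) / 2) = A3 at hA3
    field_simp
  rw [eL]
  have hF : 0 ≤ Fc n p s lam := by
    unfold Fc; positivity
  refine mul_le_mul_of_nonneg_left ?_ hF
  refine (mul_le_mul_of_nonneg_left hE (by positivity)).trans ?_
  have eN := mul_le_mul_of_nonneg_left hWt hN
  have e1 : (r ^ n)⁻¹ * r ^ (p * s) * (cnps n p s * Lam * (C1 p + 2 ^ (p - 1)) *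
      (2 * (W1c n * r ^ n * (r ^ (-(p * s)) * MM n p s)))) = c1c n p s Lam := by
    rw [Real.rpow_neg hr.le]; unfold c1c; field_simp
  have e2 : (r ^ n)⁻¹ * r ^ (p * s) * (cnps n p s * Lam * 2 ^ (p - 1) * b ^ (1 - p) * 4 ^ ((n:ℝ) + p * s) *
      (2 * (W1c n * r ^ n * J))) = c2c n p s Lam * (1 / b ^ (p - 1) * (r / R) ^ (p * s) *
        (p * s / sphereArea n * R ^ (p * s) * J)) := by
    have : b ^ (1 - p) = (b ^ (p - 1))⁻¹ := by rw [← Real.rpow_neg hb.le]; congr 1; ring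
    rw [this, Real.div_rpow hr.le hR.le]; unfold c2c
    have hbp : 0 < b ^ (p - 1) := by positivity
    field_simp
  rw [mul_add, mul_add, e1, e2]
  unfold c3c
  linarith

end F

/-- the truncated logarithm of a weak supersolution has bounded
mean oscillation (Corollary 5.2). -/
theorem truncated_log_of_supersolution_bmo
    (n : ℕ) (hn : 1 ≤ n) (p s lam Lam : ℝ)
    (hp : 1 < p) (hs0 : 0 < s) (hs1 : s < 1)
    (hlam : 0 < lam) (hlamLam : lam ≤ Lam)
    (Ω : Set (Rn n)) (hΩopen : IsOpen Ω) (hΩconn : IsConnected Ω)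
    (hΩbdd : Bornology.IsBounded Ω) :
    ∃ C : ℝ, 0 < C ∧
      ∀ q : ℝ, (n : ℝ) / (p * s) < q → 1 < (n : ℝ) / (p * s) →
      ∀ V : Rn n → ℝ, IsPotential n p s q V →
      ∀ g : Rn n → ℝ, MemWsp n p s Set.univ g →
      ∀ K : Rn n → ℝ, KernelClass n p s lam Lam K →
      ∀ u : Rn n → ℝ, WeakSupersolution n p s Ω K V g u →
      ∀ (x₀ : Rn n) (R : ℝ), 0 < R → Metric.ball x₀ R ⊆ Ω →
        (∀ x ∈ Metric.ball x₀ R, 0 ≤ u x) →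
      ∀ a b : ℝ, 0 < a → a < 1 → 0 < b → b < 1 → ∀ d : ℝ, 0 < d →
      let vbar : Rn n → ℝ :=
        fun x => min (max (Real.log ((a + b) / (u x + b))) 0) d
      ∀ r : ℝ, 0 < r → r < R / 2 →
        (⨍ x in Metric.ball x₀ r, |vbar x - (⨍ y in Metric.ball x₀ r, vbar y)| ^ p) ≤
          C * (1 / b ^ (p - 1) * (r / R) ^ (p * s) *
                tail n p s (minusPart u) x₀ R ^ (p - 1) +
              (1 + lqNormOn n q Ω (plusPart V))) := by
  obtain ⟨ρ₀, hρ₀⟩ := hΩbdd.subset_ball (0 : Rn n)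
  have hρΩ : Ω ⊆ ball (0 : Rn n) (max 1 ρ₀) := hρ₀.trans (ball_subset_ball (le_max_right _ _))
  set ρ := max 1 ρ₀ with hρdef
  have hρ : 0 < ρ := lt_of_lt_of_le one_pos (le_max_left _ _)
  have hc : 0 < cnps n p s := cnps_pos p s hp hs1
  have hom := om_pos (n := n)
  have hsp := sphere_pos hn
  have hW1 : 0 < W1c n := by unfold W1c; positivity
  have hLam : 0 < Lam := by linarith
  have hp1 : 0 < p - 1 := by linarith
  have hF : 0 < Fc n p s lam := by unfold Fc; positivity
  have h1 : 0 ≤ c1c n p s Lam := by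
    have := C1_pos p hp
    have := MM_nonneg (n := n) p s
    unfold c1c; positivity
  have h2 : 0 ≤ c2c n p s Lam := by unfold c2c; positivity
  have h3 : 0 < c3c n p s ρ := by unfold c3c; positivity
  refine ⟨Fc n p s lam * (c1c n p s Lam + c2c n p s Lam + c3c n p s ρ), by positivity, ?_⟩
  intro q hqn hn1 V hV g _ K hK u hsup x₀ R hR hB hu a b ha _ hb _ d hd vbar r hr hrR
  have hRρ := rad_le hn x₀ R ρ hR hρ (hB.trans hρΩ)
  have key := final_bound hn p s lam Lam q a b d r R ρ hp hs0 hs1 hlam hlamLam hqn (hn1.trans hqn) ha hb hd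
    hr hrR (by linarith) Ω hΩbdd V hV g K hK u hsup x₀ hB hu
  refine key.trans ?_
  rw [mul_assoc (Fc n p s lam)]
  refine mul_le_mul_of_nonneg_left ?_ hF.le
  have hN := lq_nonneg q Ω (plusPart V)
  have hX : 0 ≤ 1 / b ^ (p - 1) * (r / R) ^ (p * s) * tail n p s (minusPart u) x₀ R ^ (p - 1) := by
    rw [tail_pow hn p s R hp hs0 hR]
    have hJ : 0 ≤ ∫ y in (Metric.ball x₀ R)ᶜ, |minusPart u y| ^ (p - 1) * ‖y - x₀‖ ^ (-(n : ℝ) - p * s) :=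
      integral_nonneg fun y => by positivity
    positivity
  generalize 1 / b ^ (p - 1) * (r / R) ^ (p * s) * tail n p s (minusPart u) x₀ R ^ (p - 1) = X at hX
  generalize lqNormOn n q Ω (plusPart V) = N at hN
  have m1 := mul_nonneg h1 hX
  have m2 := mul_nonneg h1 hN
  have m3 := mul_nonneg h2 hN
  have m4 := mul_nonneg h3.le hX
  nlinarith
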